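/- For every ε > 0 there exists δ₀ = δ₀(ε) such that the following holds for all δ ≥ δ₀: let G = (V,E) be a finite simple graph with weighted lists of colours (L,μ). If for every edge e ∈ E we have (a) μ(e,c) ∈ [exp(−δ^{1/25}), δ^{−1}] for every c ∈ L(e), (b) |L(e)|_μ ≥ 1+ε, and (c) for every vertex v ∈ V and colour c ∈ ℕ, Σ_{e ∼ v, c ∈ L(e)} μ(e,c) ≤ 1, then there is an L-edge-colouring of G. -/

import Mathlib

/-- An `L`-edge-colouring of a simple graph `G`. -/
def IsLEdgeColouring {V : Type} (G : SimpleGraph V) (L : Sym2 V → Finset ℕ)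
    (γ : Sym2 V → ℕ) : Prop :=
  (∀ e ∈ G.edgeSet, γ e ∈ L e) ∧
  ∀ e ∈ G.edgeSet, ∀ f ∈ G.edgeSet, e ≠ f → (∃ v, v ∈ e ∧ v ∈ f) → γ e ≠ γ f

set_option linter.unusedSectionVars false


namespace Nib
open Finset Classical

section Prob
variable {I X : Type} [Fintype I] [Fintype X]

noncomputable def wt (p : I → X → ℝ) (ω : I → X) : ℝ := ∏ i, p i (ω i)

noncomputable def Ex (p : I → X → ℝ) (F : (I → X) → ℝ) : ℝ := ∑ ω, wt p ω * F ω

structure IsP (p : I → X → ℝ) : Prop where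
  nonneg : ∀ i x, 0 ≤ p i x
  sum_one : ∀ i, ∑ x, p i x = 1

noncomputable def mix (S : Finset I) (ω' ω : I → X) : I → X := fun i => if i ∈ S then ω' i else ω i

def Dep {β : Type} (F : (I → X) → β) (S : Finset I) : Prop :=
  ∀ ω ω', (∀ i ∈ S, ω i = ω' i) → F ω = F ω'

lemma wt_nonneg {p : I → X → ℝ} (hp : IsP p) (ω : I → X) : 0 ≤ wt p ω :=
  Finset.prod_nonneg fun i _ => hp.nonneg i _

lemma Ex_mono {p : I → X → ℝ} (hp : IsP p) {F H : (I → X) → ℝ} (h : ∀ ω, F ω ≤ H ω) :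
    Ex p F ≤ Ex p H :=
  Finset.sum_le_sum fun ω _ => mul_le_mul_of_nonneg_left (h ω) (wt_nonneg hp ω)

lemma Ex_add (p : I → X → ℝ) (F H : (I → X) → ℝ) :
    Ex p (fun ω => F ω + H ω) = Ex p F + Ex p H := by
  simp [Ex, mul_add, Finset.sum_add_distrib]

lemma Ex_sub (p : I → X → ℝ) (F H : (I → X) → ℝ) :
    Ex p (fun ω => F ω - H ω) = Ex p F - Ex p H := by
  simp [Ex, mul_sub, Finset.sum_sub_distrib]

lemma Ex_mul_const (p : I → X → ℝ) (F : (I → X) → ℝ) (a : ℝ) :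
    Ex p (fun ω => F ω * a) = Ex p F * a := by
  simp only [Ex, Finset.sum_mul]
  exact Finset.sum_congr rfl fun ω _ => by ring

lemma Ex_const_mul (p : I → X → ℝ) (F : (I → X) → ℝ) (a : ℝ) :
    Ex p (fun ω => a * F ω) = a * Ex p F := by
  simp only [Ex, Finset.mul_sum]
  exact Finset.sum_congr rfl fun ω _ => by ring

lemma Ex_sum {κ : Type} (p : I → X → ℝ) (T : Finset κ) (F : κ → (I → X) → ℝ) :
    Ex p (fun ω => ∑ k ∈ T, F k ω) = ∑ k ∈ T, Ex p (F k) := by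
  simp only [Ex, Finset.mul_sum]
  exact Finset.sum_comm

lemma wt_sum {p : I → X → ℝ} (hp : IsP p) : ∑ ω, wt p ω = 1 := by
  unfold wt
  have := Finset.prod_univ_sum (fun _ : I => (Finset.univ : Finset X)) (fun i x => p i x)
  rw [Fintype.piFinset_univ] at this
  rw [← this]
  exact Finset.prod_eq_one fun i _ => hp.sum_one i

lemma Ex_const {p : I → X → ℝ} (hp : IsP p) (a : ℝ) : Ex p (fun _ => a) = a := by
  simp [Ex, ← Finset.sum_mul, wt_sum hp]

lemma Ex_nonneg {p : I → X → ℝ} (hp : IsP p) {F : (I → X) → ℝ} (h : ∀ ω, 0 ≤ F ω) :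
    0 ≤ Ex p F :=
  Finset.sum_nonneg fun ω _ => mul_nonneg (wt_nonneg hp ω) (h ω)

lemma Ex_single {p : I → X → ℝ} (hp : IsP p) (i : I) (h : X → ℝ) :
    Ex p (fun ω => h (ω i)) = ∑ x, p i x * h x := by
  have h1 := Finset.prod_univ_sum (fun _ : I => (Finset.univ : Finset X))
    (fun j x => p j x * (if j = i then h x else 1))
  rw [Fintype.piFinset_univ] at h1
  have h2 : ∀ ω : I → X, ∏ j, (p j (ω j) * (if j = i then h (ω j) else 1)) = wt p ω * h (ω i) := by
    intro ω
    rw [Finset.prod_mul_distrib]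
    simp [wt]
  unfold Ex
  simp_rw [h2] at h1
  rw [← h1, Finset.prod_eq_single i]
  · simp
  · intro j _ hj
    simp [hj, hp.sum_one]
  · simp

lemma mix_wt (p : I → X → ℝ) (S : Finset I) (ω ω' : I → X) :
    wt p (mix S ω' ω) * wt p (mix S ω ω') = wt p ω * wt p ω' := by
  unfold wt mix
  rw [← Finset.prod_mul_distrib, ← Finset.prod_mul_distrib]
  refine Finset.prod_congr rfl fun i _ => ?_
  by_cases h : i ∈ S <;> simp [h, mul_comm]

lemma Ex_mix {p : I → X → ℝ} (hp : IsP p) (S : Finset I) (F : (I → X) → ℝ) :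
    Ex p (fun ω => Ex p (fun ω' => F (mix S ω' ω))) = Ex p F := by
  have key : ∑ z : (I → X) × (I → X), wt p z.1 * wt p z.2 * F (mix S z.2 z.1)
      = ∑ z : (I → X) × (I → X), wt p z.1 * wt p z.2 * F z.1 := by
    have hinv : Function.Involutive
        (fun z : (I → X) × (I → X) => (mix S z.2 z.1, mix S z.1 z.2)) := by
      rintro ⟨a, b⟩
      ext i <;> by_cases h : i ∈ S <;> simp [mix, h]
    rw [← Equiv.sum_comp hinv.toPerm (fun z => wt p z.1 * wt p z.2 * F z.1)]
    refine Finset.sum_congr rfl fun z _ => ?_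
    simp only [Function.Involutive.coe_toPerm]
    rw [mix_wt]
  rw [Fintype.sum_prod_type, Fintype.sum_prod_type] at key
  simp only [Ex, Finset.mul_sum]
  calc _ = _ := Finset.sum_congr rfl fun ω _ => Finset.sum_congr rfl fun ω' _ => by rw [← mul_assoc]
    _ = _ := key
    _ = _ := Finset.sum_congr rfl fun ω _ => by
      dsimp only
      rw [← Finset.sum_mul, ← Finset.mul_sum, wt_sum hp, mul_one]

lemma Dep.mix_mem {β : Type} {F : (I → X) → β} {S T : Finset I} (h : Dep F S) (hST : S ⊆ T)
    (ω ω' : I → X) : F (mix T ω' ω) = F ω' :=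
  h _ _ fun i hi => by simp [mix, hST hi]

lemma Dep.mix_disj {β : Type} {F : (I → X) → β} {S T : Finset I} (h : Dep F S) (hST : Disjoint S T)
    (ω ω' : I → X) : F (mix T ω' ω) = F ω :=
  h _ _ fun i hi => by simp [mix, Finset.disjoint_left.1 hST hi]

lemma Dep.mono {β : Type} {F : (I → X) → β} {S T : Finset I} (h : Dep F S) (hST : S ⊆ T) :
    Dep F T := fun ω ω' h' => h ω ω' fun i hi => h' i (hST hi)

lemma Ex_indep {p : I → X → ℝ} (hp : IsP p) {S T : Finset I} {F H : (I → X) → ℝ}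
    (hF : Dep F S) (hH : Dep H T) (hST : Disjoint S T) :
    Ex p (fun ω => F ω * H ω) = Ex p F * Ex p H := by
  rw [← Ex_mix hp S (fun ω => F ω * H ω)]
  have : ∀ ω, Ex p (fun ω' => F (mix S ω' ω) * H (mix S ω' ω)) = Ex p F * H ω := by
    intro ω
    rw [← Ex_mul_const]
    congr 1
    funext ω'
    rw [hF.mix_mem (subset_refl _), hH.mix_disj hST.symm]
  simp_rw [this]
  rw [Ex_const_mul]

/-- indicator of a proposition -/
noncomputable def ind (P : Prop) : ℝ := if P then 1 else 0

lemma ind_nonneg (P : Prop) : 0 ≤ ind P := by unfold ind; split_ifs <;> norm_num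
lemma ind_le_one (P : Prop) : ind P ≤ 1 := by unfold ind; split_ifs <;> norm_num
lemma ind_true {P : Prop} (h : P) : ind P = 1 := if_pos h
lemma ind_false {P : Prop} (h : ¬ P) : ind P = 0 := if_neg h

/-- Local lemma, sum version -/
lemma local_lemma {B : Type} [Fintype B] {p : I → X → ℝ} (hp : IsP p)
    (bad : B → (I → X) → Prop) (vars : B → Finset I) (hdep : ∀ b, Dep (bad b) (vars b))
    (hq : ∀ b, Ex p (fun ω => ind (bad b ω)) ≤ 1 / 4)
    (hs : ∀ b, ∑ b' ∈ univ.filter (fun b' => ¬ Disjoint (vars b) (vars b')),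
      Ex p (fun ω => ind (bad b' ω)) ≤ 1 / 4) :
    ∃ ω, 0 < wt p ω ∧ ∀ b, ¬ bad b ω := by
  set P : B → ℝ := fun b => Ex p (fun ω => ind (bad b ω)) with hP
  set Q : Finset B → ℝ := fun T => Ex p (fun ω => ind (∀ b ∈ T, ¬ bad b ω)) with hQ
  have hP0 : ∀ b, 0 ≤ P b := fun b => Ex_nonneg hp fun ω => ind_nonneg _
  have hQ0 : ∀ T, 0 ≤ Q T := fun T => Ex_nonneg hp fun ω => ind_nonneg _
  have main : ∀ n : ℕ, ∀ T : Finset B, T.card ≤ n → ∀ b,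
      Ex p (fun ω => ind (bad b ω) * ind (∀ b' ∈ T, ¬ bad b' ω)) ≤ 2 * P b * Q T := by
    intro n
    induction n with
    | zero =>
      intro T hT b
      have : T = ∅ := by simpa using hT
      subst this
      have h1 : ∀ ω, ind (∀ b' ∈ (∅ : Finset B), ¬ bad b' ω) = 1 := fun ω => ind_true (by simp)
      simp only [hQ, h1, mul_one, Ex_const hp]
      have := hP0 b
      simp only [hP] at this ⊢
      linarith
    | succ n ih =>
      intro T hT b
      set T1 := T.filter (fun b' => ¬ Disjoint (vars b) (vars b')) with hT1
      set T2 := T.filter (fun b' => Disjoint (vars b) (vars b')) with hT2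
      have step1 : Ex p (fun ω => ind (bad b ω) * ind (∀ b' ∈ T, ¬ bad b' ω)) ≤ P b * Q T2 := by
        have h1 : Ex p (fun ω => ind (bad b ω) * ind (∀ b' ∈ T2, ¬ bad b' ω)) = P b * Q T2 := by
          refine Ex_indep hp (S := vars b) (T := T2.biUnion vars) ?_ ?_ ?_
          · intro ω ω' h
            simp only [hdep b ω ω' h]
          · intro ω ω' h
            have : (∀ b' ∈ T2, ¬ bad b' ω) ↔ (∀ b' ∈ T2, ¬ bad b' ω') := by
              refine forall₂_congr fun b' hb' => ?_
              rw [hdep b' ω ω' fun i hi => h i (mem_biUnion.2 ⟨b', hb', hi⟩)]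
            simp only [this]
          · rw [Finset.disjoint_biUnion_right]
            intro b' hb'
            exact (mem_filter.1 hb').2
        rw [← h1]
        refine Ex_mono hp fun ω => mul_le_mul_of_nonneg_left ?_ (ind_nonneg _)
        unfold ind
        split_ifs with h h'
        · exact le_refl _
        · exact absurd (fun b' hb' => h b' (mem_filter.1 hb').1) h'
        · norm_num
        · exact le_refl _
      by_cases hemp : T1 = ∅
      · have : T2 = T := by
          ext b'
          simp only [hT2, mem_filter, and_iff_left_iff_imp]
          intro hb'
          by_contra hc
          have : b' ∈ T1 := mem_filter.2 ⟨hb', hc⟩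
          simp [hemp] at this
        rw [this] at step1
        have := mul_nonneg (hP0 b) (hQ0 T)
        linarith
      · have hcard : T2.card ≤ n := by
          have h1 : T2.card + T1.card = T.card := by
            rw [hT1, hT2]; exact Finset.card_filter_add_card_filter_not _
          have h2 : 0 < T1.card := card_pos.2 (nonempty_iff_ne_empty.2 hemp)
          omega
        have h3 : Q T2 - ∑ b' ∈ T1, 2 * P b' * Q T2 ≤ Q T := by
          have h4 : Q T2 - ∑ b' ∈ T1, Ex p (fun ω => ind (bad b' ω) * ind (∀ b'' ∈ T2, ¬ bad b'' ω))
              ≤ Q T := by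
            rw [← Ex_sum, ← Ex_sub]
            refine Ex_mono hp fun ω => ?_
            by_cases h2 : ∀ b'' ∈ T2, ¬ bad b'' ω
            · by_cases h1 : ∀ b' ∈ T1, ¬ bad b' ω
              · rw [ind_true (P := ∀ b ∈ T, ¬ bad b ω)]
                · have : 0 ≤ ∑ k ∈ T1, ind (bad k ω) * ind (∀ b'' ∈ T2, ¬bad b'' ω) :=
                    Finset.sum_nonneg fun k _ => mul_nonneg (ind_nonneg _) (ind_nonneg _)
                  have := ind_le_one (∀ b'' ∈ T2, ¬bad b'' ω)
                  linarith
                · intro b' hb'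
                  by_cases hc : Disjoint (vars b) (vars b')
                  · exact h2 b' (mem_filter.2 ⟨hb', hc⟩)
                  · exact h1 b' (mem_filter.2 ⟨hb', hc⟩)
              · push Not at h1
                obtain ⟨b', hb', hbad⟩ := h1
                have h5 : ind (bad b' ω) * ind (∀ b'' ∈ T2, ¬bad b'' ω) ≤
                    ∑ k ∈ T1, ind (bad k ω) * ind (∀ b'' ∈ T2, ¬bad b'' ω) :=
                  Finset.single_le_sum (f := fun k => ind (bad k ω) * ind (∀ b'' ∈ T2, ¬bad b'' ω))
                    (fun k _ => mul_nonneg (ind_nonneg _) (ind_nonneg _)) hb'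
                rw [ind_true hbad, one_mul] at h5
                have := ind_nonneg (∀ b ∈ T, ¬ bad b ω)
                linarith
            · rw [ind_false h2]
              simp [ind_nonneg]
          refine le_trans (sub_le_sub_left (Finset.sum_le_sum fun b' _ => ih T2 hcard b') _) h4
        have h6 : ∑ b' ∈ T1, P b' ≤ 1 / 4 := by
          refine le_trans ?_ (hs b)
          refine Finset.sum_le_sum_of_subset_of_nonneg ?_ fun b' _ _ => hP0 b'
          intro b' hb'
          simp only [hT1, mem_filter] at hb' ⊢
          exact ⟨mem_univ _, hb'.2⟩
        have h7 : ∑ b' ∈ T1, 2 * P b' * Q T2 = 2 * (∑ b' ∈ T1, P b') * Q T2 := by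
          rw [Finset.mul_sum, Finset.sum_mul]
        rw [h7] at h3
        have h8 : Q T2 ≤ 2 * Q T := by nlinarith [hQ0 T2]
        nlinarith [hP0 b]
  have pos : ∀ T : Finset B, 0 < Q T := by
    intro T
    induction T using Finset.induction_on with
    | empty =>
      have h1 : ∀ ω, ind (∀ b' ∈ (∅ : Finset B), ¬ bad b' ω) = 1 := fun ω => ind_true (by simp)
      simp only [hQ, h1, Ex_const hp]
      norm_num
    | insert b T hb ih =>
      have h1 : Q T - 2 * P b * Q T ≤ Q (insert b T) := by
        refine le_trans (sub_le_sub_left (main _ T (le_refl _) b) _) ?_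
        rw [← Ex_sub]
        refine Ex_mono hp fun ω => ?_
        by_cases h1 : bad b ω
        · simp [ind_true h1, ind_nonneg]
        · rw [ind_false h1]
          have : (∀ b' ∈ insert b T, ¬ bad b' ω) ↔ ∀ b' ∈ T, ¬ bad b' ω := by simp [h1]
          simp only [this]
          simp
      have := hq b
      have : P b ≤ 1/4 := hq b
      nlinarith
  have hfin := pos univ
  by_contra hcon
  push Not at hcon
  have : Q univ ≤ 0 := by
    refine Finset.sum_nonpos fun ω _ => ?_
    rcases (wt_nonneg hp ω).lt_or_eq with h | h
    · obtain ⟨b, hb⟩ := hcon ω h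
      dsimp only
      rw [ind_false]
      · simp
      · intro h'; exact h' b (mem_univ _) hb
    · simp [← h]
  linarith

/-- exponential moments for surviving weight -/
lemma conc {p : I → X → ℝ} (hp : IsP p) {ι J : Type} [Fintype ι]
    (S : J → Finset I) (hS : ∀ j k, j ≠ k → Disjoint (S j) (S k))
    (Y : ι → J → (I → X) → ℝ) (hY0 : ∀ i j ω, 0 ≤ Y i j ω) (hY1 : ∀ i j ω, Y i j ω ≤ 1)
    (hYd : ∀ i j, Dep (Y i j) (S j)) (b : ι → ℝ) (M lam : ℝ)
    (hM : ∀ j ω, ∑ i, b i * Y i j ω ≤ M) (hlam : |lam| * M ≤ 1) (T : Finset J) :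
    ∀ a : ι → ℝ, (∀ i, 0 ≤ a i) → (∀ i, a i ≤ b i) →
    Ex p (fun ω => Real.exp (lam * ∑ i, a i * ∏ j ∈ T, (1 - Y i j ω))) ≤
      Real.exp (lam * ∑ i, a i * ∏ j ∈ T, (1 - Ex p (Y i j)) +
        lam ^ 2 * M * ∑ i, b i * (1 - ∏ j ∈ T, (1 - Ex p (Y i j)))) := by
  have hy0 : ∀ i j, 0 ≤ Ex p (Y i j) := fun i j => Ex_nonneg hp (hY0 i j)
  have hy1 : ∀ i j, Ex p (Y i j) ≤ 1 := fun i j =>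
    le_trans (Ex_mono hp (hY1 i j)) (Ex_const hp 1).le
  induction T using Finset.induction_on with
  | empty => intro a _ _; simp [Ex_const hp]
  | insert j0 T hj0 ih =>
    intro a ha hab
    have hb : ∀ i, 0 ≤ b i := fun i => (ha i).trans (hab i)
    set π : ι → ℝ := fun i => ∏ j ∈ T, (1 - Ex p (Y i j)) with hπ
    have hπ0 : ∀ i, 0 ≤ π i := fun i => Finset.prod_nonneg fun j _ => by linarith [hy1 i j]
    have hπ1 : ∀ i, π i ≤ 1 := fun i => Finset.prod_le_one (fun j _ => by linarith [hy1 i j])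
      fun j _ => by linarith [hy0 i j]
    rw [← Ex_mix hp (univ \ S j0)]
    have h1 : ∀ ω, Ex p (fun ω' => Real.exp (lam * ∑ i, a i * ∏ j ∈ insert j0 T,
        (1 - Y i j (mix (univ \ S j0) ω' ω)))) ≤
        Real.exp (lam * ∑ i, (a i * (1 - Y i j0 ω)) * π i + lam ^ 2 * M * ∑ i, b i * (1 - π i)) := by
      intro ω
      refine le_trans (le_of_eq ?_) (ih (fun i => a i * (1 - Y i j0 ω)) ?_ ?_)
      · congr 1
        funext ω'
        congr 2
        refine Finset.sum_congr rfl fun i _ => ?_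
        rw [Finset.prod_insert hj0, (hYd i j0).mix_disj disjoint_sdiff]
        rw [mul_assoc]
        congr 2
        refine Finset.prod_congr rfl fun j hj => ?_
        rw [(hYd i j).mix_mem]
        intro x hx
        have hne : j ≠ j0 := by rintro rfl; exact hj0 hj
        simp [Finset.disjoint_left.1 (hS j j0 hne) hx]
      · intro i; exact mul_nonneg (ha i) (by linarith [hY1 i j0 ω])
      · intro i
        refine le_trans ?_ (hab i)
        nlinarith [ha i, hY0 i j0 ω]
    refine le_trans (Ex_mono hp h1) ?_
    -- the variable X
    set Z : (I → X) → ℝ := fun ω => ∑ i, a i * π i * Y i j0 ω with hZ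
    have hZ0 : ∀ ω, 0 ≤ Z ω := fun ω => Finset.sum_nonneg fun i _ =>
      mul_nonneg (mul_nonneg (ha i) (hπ0 i)) (hY0 _ _ _)
    have hZM : ∀ ω, Z ω ≤ M := fun ω => by
      refine le_trans (Finset.sum_le_sum fun i _ => ?_) (hM j0 ω)
      refine mul_le_mul_of_nonneg_right ?_ (hY0 _ _ _)
      nlinarith [ha i, hab i, hπ0 i, hπ1 i]
    have hEZ : Ex p Z = ∑ i, a i * π i * Ex p (Y i j0) := by
      rw [hZ, Ex_sum]
      exact Finset.sum_congr rfl fun i _ => Ex_const_mul _ _ _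
    have hmgf : Ex p (fun ω => Real.exp (-lam * Z ω)) ≤
        Real.exp (-lam * Ex p Z + lam ^ 2 * (M * Ex p Z)) := by
      have h2 : ∀ ω, Real.exp (-lam * Z ω) ≤ 1 + (-lam + lam ^ 2 * M) * Z ω := by
        intro ω
        have hM0 : 0 ≤ M := (hZ0 ω).trans (hZM ω)
        have habs : |(-lam) * Z ω| ≤ 1 := by
          rw [abs_mul, abs_neg, abs_of_nonneg (hZ0 ω)]
          exact le_trans (mul_le_mul_of_nonneg_left (hZM ω) (abs_nonneg _)) hlam
        have := Real.abs_exp_sub_one_sub_id_le habs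
        have h3 := (abs_le.1 this).2
        have h4 : (-lam * Z ω) ^ 2 ≤ lam ^ 2 * M * Z ω := by
          have : (-lam * Z ω) ^ 2 = lam ^ 2 * (Z ω * Z ω) := by ring
          rw [this, mul_assoc]
          exact mul_le_mul_of_nonneg_left (mul_le_mul_of_nonneg_right (hZM ω) (hZ0 ω)) (sq_nonneg _)
        linarith
      refine le_trans (Ex_mono hp h2) ?_
      rw [Ex_add, Ex_const hp, Ex_const_mul]
      refine le_trans (le_of_eq ?_) (Real.add_one_le_exp _)
      ring
    have hEZ2 : Ex p Z ≤ ∑ i, b i * π i * Ex p (Y i j0) := by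
      rw [hEZ]
      refine Finset.sum_le_sum fun i _ => ?_
      exact mul_le_mul_of_nonneg_right (mul_le_mul_of_nonneg_right (hab i) (hπ0 i)) (hy0 _ _)
    have heq : ∀ ω, Real.exp (lam * ∑ i, (a i * (1 - Y i j0 ω)) * π i
          + lam ^ 2 * M * ∑ i, b i * (1 - π i)) =
        Real.exp (-lam * Z ω) * Real.exp (lam * ∑ i, a i * π i
          + lam ^ 2 * M * ∑ i, b i * (1 - π i)) := by
      intro ω
      rw [← Real.exp_add]
      congr 1
      have : ∑ i, (a i * (1 - Y i j0 ω)) * π i = ∑ i, a i * π i - Z ω := by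
        rw [hZ, ← Finset.sum_sub_distrib]
        exact Finset.sum_congr rfl fun i _ => by ring
      rw [this]; ring
    simp_rw [heq]
    rw [Ex_mul_const]
    refine le_trans (mul_le_mul_of_nonneg_right hmgf (Real.exp_pos _).le) ?_
    rw [← Real.exp_add]
    refine Real.exp_le_exp.2 ?_
    have e1 : ∑ i, a i * ∏ j ∈ insert j0 T, (1 - Ex p (Y i j)) = ∑ i, a i * π i - Ex p Z := by
      rw [hEZ, ← Finset.sum_sub_distrib]
      refine Finset.sum_congr rfl fun i _ => ?_
      rw [Finset.prod_insert hj0]; ring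
    have e2 : ∑ i, b i * (1 - ∏ j ∈ insert j0 T, (1 - Ex p (Y i j))) =
        ∑ i, b i * (1 - π i) + ∑ i, b i * π i * Ex p (Y i j0) := by
      rw [← Finset.sum_add_distrib]
      refine Finset.sum_congr rfl fun i _ => ?_
      rw [Finset.prod_insert hj0]; ring
    rw [e1, e2]
    have hM0 : 0 ≤ M := le_trans (Finset.sum_nonneg fun i _ => mul_nonneg (hb i) (hY0 i j0 _)) 
      (hM j0 (Classical.choice (by
        by_contra hne
        rw [not_nonempty_iff] at hne
        have := wt_sum hp
        simp at this)))
    have : lam ^ 2 * (M * Ex p Z) ≤ lam ^ 2 * (M * ∑ i, b i * π i * Ex p (Y i j0)) := by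
      gcongr
    nlinarith

lemma markov {p : I → X → ℝ} (hp : IsP p) (P : (I → X) → Prop) (F : (I → X) → ℝ)
    (h : ∀ ω, P ω → 0 ≤ F ω) : Ex p (fun ω => ind (P ω)) ≤ Ex p (fun ω => Real.exp (F ω)) := by
  refine Ex_mono hp fun ω => ?_
  by_cases hP : P ω
  · rw [ind_true hP]; exact Real.one_le_exp (h ω hP)
  · rw [ind_false hP]; exact (Real.exp_pos _).le

end Prob
end Nib

namespace Nib
open Finset Classical

section Graph
variable {V E C : Type} [Fintype V] [Fintype E] [Fintype C] [Nonempty C]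

structure IsG (ends : E → Finset V) : Prop where
  card : ∀ e, (ends e).card = 2
  inj : Function.Injective ends

/-- two edges meet (reflexive) -/
def Adj (ends : E → Finset V) (e f : E) : Prop := ∃ v, v ∈ ends e ∧ v ∈ ends f

lemma Adj.symm {ends : E → Finset V} {e f : E} (h : Adj ends e f) : Adj ends f e := by
  obtain ⟨v, h1, h2⟩ := h; exact ⟨v, h2, h1⟩

lemma IsG.adj_self {ends : E → Finset V} (hG : IsG ends) (e : E) : Adj ends e e := by
  have : (ends e).Nonempty := card_pos.1 (by rw [hG.card e]; norm_num)
  obtain ⟨v, hv⟩ := this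
  exact ⟨v, hv, hv⟩

def Colourable (ends : E → Finset V) (A : Finset E) (μ : E → C → ℝ) : Prop :=
  ∃ γ : E → C, (∀ e ∈ A, 0 < μ e (γ e)) ∧
    ∀ e ∈ A, ∀ f ∈ A, e ≠ f → Adj ends e f → γ e ≠ γ f

lemma adj_sum (ends : E → Finset V) (e : E) (x : E → ℝ) (hx : ∀ f, 0 ≤ x f) :
    ∑ f ∈ univ.filter (fun f => Adj ends e f), x f ≤
      ∑ v ∈ ends e, ∑ f ∈ univ.filter (fun f => v ∈ ends f), x f := by
  simp_rw [Finset.sum_filter]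
  rw [Finset.sum_comm]
  refine Finset.sum_le_sum fun f _ => ?_
  by_cases h : Adj ends e f
  · rw [if_pos h]
    obtain ⟨v, h1, h2⟩ := h
    have := Finset.single_le_sum (f := fun v => if v ∈ ends f then x f else 0)
      (fun k _ => by split_ifs; exacts [hx f, le_refl _]) h1
    simpa [h2] using this
  · rw [if_neg h]
    exact Finset.sum_nonneg fun k _ => by split_ifs; exacts [hx f, le_refl _]

lemma adj_sum_le {ends : E → Finset V} (hG : IsG ends) (e : E) (x : E → ℝ) (hx : ∀ f, 0 ≤ x f)
    (d : ℝ) (hd : ∀ v, ∑ f ∈ univ.filter (fun f => v ∈ ends f), x f ≤ d) :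
    ∑ f ∈ univ.filter (fun f => Adj ends e f), x f ≤ 2 * d := by
  refine le_trans (adj_sum ends e x hx) ?_
  refine le_trans (Finset.sum_le_sum fun v _ => hd v) ?_
  simp [hG.card e]

lemma terminal {ends : E → Finset V} (hG : IsG ends) (A : Finset E) (μ : E → C → ℝ)
    (h0 : ∀ e c, 0 ≤ μ e c) (hl : ∀ e ∈ A, 1 ≤ ∑ c, μ e c)
    (hd : ∀ v c, ∑ e ∈ univ.filter (fun e => v ∈ ends e), μ e c ≤ 1 / 32) :
    Colourable ends A μ := by
  by_cases hA : ∃ e0, e0 ∈ A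
  swap
  · push Not at hA
    exact ⟨fun _ => Classical.arbitrary C, fun e he => absurd he (hA e), fun e he => absurd he (hA e)⟩
  obtain ⟨e0, he0⟩ := hA
  have hC : Nonempty C := inferInstance
  obtain ⟨c0⟩ := hC
  set p : E → C → ℝ := fun e c => if e ∈ A then μ e c / ∑ c', μ e c' else ind (c = c0) with hpdef
  have hp : IsP p := by
    constructor
    · intro e c
      simp only [hpdef]
      split_ifs with h
      · exact div_nonneg (h0 e c) (by linarith [hl e h])
      · exact ind_nonneg _
    · intro e
      simp only [hpdef]
      split_ifs with h
      · rw [← Finset.sum_div]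
        exact div_self (by linarith [hl e h])
      · simp [ind]
  have hpμ : ∀ e ∈ A, ∀ c, p e c ≤ μ e c := by
    intro e he c
    simp only [hpdef, he, if_true]
    exact div_le_self (h0 e c) (hl e he)
  set bad : E × E → (E → C) → Prop := fun z ω => z.1 ∈ A ∧ z.2 ∈ A ∧ z.1 ≠ z.2 ∧
    Adj ends z.1 z.2 ∧ ω z.1 = ω z.2 with hbad
  set R : E → E → ℝ := fun e f => if e ∈ A ∧ f ∈ A ∧ Adj ends e f then ∑ c, p e c * p f c else 0
    with hR
  have hR0 : ∀ e f, 0 ≤ R e f := by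
    intro e f
    simp only [hR]
    split_ifs
    · exact Finset.sum_nonneg fun c _ => mul_nonneg (hp.nonneg _ _) (hp.nonneg _ _)
    · exact le_refl _
  have hRs : ∀ e f, R e f = R f e := by
    intro e f
    simp only [hR]
    have : (e ∈ A ∧ f ∈ A ∧ Adj ends e f) ↔ (f ∈ A ∧ e ∈ A ∧ Adj ends f e) :=
      ⟨fun h => ⟨h.2.1, h.1, h.2.2.symm⟩, fun h => ⟨h.2.1, h.1, h.2.2.symm⟩⟩
    simp only [this, mul_comm]
  have hPR : ∀ z : E × E, Ex p (fun ω => ind (bad z ω)) ≤ R z.1 z.2 := by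
    rintro ⟨e, f⟩
    by_cases h : e ∈ A ∧ f ∈ A ∧ e ≠ f ∧ Adj ends e f
    · obtain ⟨h1, h2, h3, h4⟩ := h
      simp only [hR, h1, h2, h4, and_self, if_true]
      have e1 : ∀ ω, ind (bad (e, f) ω) = ∑ c, ind (ω e = c) * ind (ω f = c) := by
        intro ω
        have : bad (e, f) ω ↔ ω e = ω f := by simp [hbad, h1, h2, h3, h4]
        simp [this, ind, eq_comm]
      simp_rw [e1]
      rw [Ex_sum]
      refine Finset.sum_le_sum fun c _ => ?_
      rw [Ex_indep hp (S := {e}) (T := {f})]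
      · rw [Ex_single hp e (fun x => ind (x = c)), Ex_single hp f (fun x => ind (x = c))]
        simp [ind]
      · intro ω ω' h; simp only [h e (by simp)]
      · intro ω ω' h; simp only [h f (by simp)]
      · simpa using h3
    · have : ∀ ω, ind (bad (e, f) ω) = 0 := by
        intro ω
        apply ind_false
        simp only [hbad]
        tauto
      simp_rw [this]
      rw [Ex_const hp]
      exact hR0 _ _
  have hRsum : ∀ e, ∑ f, R e f ≤ 1 / 16 := by
    intro e
    by_cases he : e ∈ A
    swap
    · simp [hR, he]
    have h1 : ∑ f, R e f ≤ ∑ f ∈ univ.filter (fun f => Adj ends e f), ∑ c, p e c * μ f c := by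
      rw [Finset.sum_filter]
      refine Finset.sum_le_sum fun f _ => ?_
      simp only [hR]
      by_cases hadj : Adj ends e f
      · by_cases hf : f ∈ A
        · simp only [he, hf, hadj, and_self, if_true]
          exact Finset.sum_le_sum fun c _ => mul_le_mul_of_nonneg_left (hpμ f hf c) (hp.nonneg _ _)
        · simp only [hf, hadj, if_true, false_and, and_false, if_false]
          exact Finset.sum_nonneg fun c _ => mul_nonneg (hp.nonneg _ _) (h0 _ _)
      · simp [hadj]
    rw [Finset.sum_comm] at h1
    refine le_trans h1 ?_
    have h2 : ∀ c, ∑ f ∈ univ.filter (fun f => Adj ends e f), p e c * μ f c ≤ p e c * (1 / 16) := by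
      intro c
      rw [← Finset.mul_sum]
      refine mul_le_mul_of_nonneg_left ?_ (hp.nonneg _ _)
      have := adj_sum_le hG e (fun f => μ f c) (fun f => h0 f c) (1/32) (fun v => hd v c)
      linarith
    refine le_trans (Finset.sum_le_sum fun c _ => h2 c) ?_
    rw [← Finset.sum_mul, hp.sum_one]; norm_num
  obtain ⟨ω, hω, hgood⟩ := local_lemma hp bad (fun z => {z.1, z.2})
    (by
      rintro ⟨e, f⟩ ω ω' h
      simp only [hbad]
      rw [h e (by simp), h f (by simp)])
    (by
      rintro ⟨e, f⟩
      refine le_trans (hPR _) ?_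
      have := Finset.single_le_sum (f := fun f => R e f) (fun k _ => hR0 e k) (mem_univ f)
      have := hRsum e
      dsimp only at *
      linarith)
    (by
      rintro ⟨e, f⟩
      have h1 : ∑ z ∈ univ.filter (fun z : E × E => ¬ Disjoint ({e, f} : Finset E) {z.1, z.2}),
          Ex p (fun ω => ind (bad z ω)) ≤ ∑ z : E × E, ((ind (z.1 = e) * R z.1 z.2 +
            ind (z.1 = f) * R z.1 z.2) + (ind (z.2 = e) * R z.1 z.2 + ind (z.2 = f) * R z.1 z.2)) := by
        rw [Finset.sum_filter]
        refine Finset.sum_le_sum fun z _ => ?_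
        have hr := hR0 z.1 z.2
        have n1 := mul_nonneg (ind_nonneg (z.1 = e)) hr
        have n2 := mul_nonneg (ind_nonneg (z.1 = f)) hr
        have n3 := mul_nonneg (ind_nonneg (z.2 = e)) hr
        have n4 := mul_nonneg (ind_nonneg (z.2 = f)) hr
        by_cases h : ¬ Disjoint ({e, f} : Finset E) {z.1, z.2}
        · rw [if_pos h]
          refine le_trans (hPR z) ?_
          rw [Finset.not_disjoint_iff] at h
          obtain ⟨x, hx1, hx2⟩ := h
          simp only [mem_insert, mem_singleton] at hx1 hx2
          rcases hx1 with rfl | rfl <;> rcases hx2 with hx2 | hx2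
          · rw [ind_true hx2.symm] at n1 ⊢; linarith
          · rw [ind_true hx2.symm] at n3 ⊢; linarith
          · rw [ind_true hx2.symm] at n2 ⊢; linarith
          · rw [ind_true hx2.symm] at n4 ⊢; linarith
        · rw [if_neg h]; linarith
      refine le_trans h1 ?_
      have a1 : ∀ g : E, ∑ z : E × E, ind (z.1 = g) * R z.1 z.2 ≤ 1 / 16 := by
        intro g
        rw [Fintype.sum_prod_type]
        simp only [ind, ite_mul, one_mul, zero_mul]
        rw [Finset.sum_comm]
        simp only [Finset.sum_ite_eq', mem_univ, if_true]
        exact hRsum g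
      have a2 : ∀ g : E, ∑ z : E × E, ind (z.2 = g) * R z.1 z.2 ≤ 1 / 16 := by
        intro g
        rw [Fintype.sum_prod_type]
        simp only [ind, ite_mul, one_mul, zero_mul]
        simp only [Finset.sum_ite_eq', mem_univ, if_true]
        simp_rw [fun x => hRs x g]
        exact hRsum g
      rw [Finset.sum_add_distrib, Finset.sum_add_distrib, Finset.sum_add_distrib]
      linarith [a1 e, a1 f, a2 e, a2 f])
  refine ⟨ω, ?_, ?_⟩
  · intro e he
    have : p e (ω e) ≠ 0 := by
      intro h
      have : wt p ω = 0 := Finset.prod_eq_zero (mem_univ e) h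
      linarith
    have h2 : 0 < p e (ω e) := lt_of_le_of_ne (hp.nonneg _ _) (Ne.symm this)
    exact lt_of_lt_of_le h2 (hpμ e he _)
  · intro e he f hf hne hadj heq
    exact hgood (e, f) ⟨he, hf, hne, hadj, heq⟩

end Graph
end Nib

namespace Nib
open Finset Classical

section Step
variable {V E C : Type} [Fintype V] [Fintype E] [Fintype C] [Nonempty C]

lemma weier {κ : Type} (T : Finset κ) (x : κ → ℝ) (h0 : ∀ k, 0 ≤ x k) (h1 : ∀ k, x k ≤ 1) :
    1 - ∑ k ∈ T, x k ≤ ∏ k ∈ T, (1 - x k) := by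
  induction T using Finset.induction_on with
  | empty => simp
  | insert a T ha ih =>
    rw [Finset.sum_insert ha, Finset.prod_insert ha]
    have : ∏ k ∈ T, (1 - x k) ≤ 1 := Finset.prod_le_one (fun k _ => by linarith [h1 k])
      (fun k _ => by linarith [h0 k])
    nlinarith [h0 a, h1 a]

def sel (μ : E → C → ℝ) (ω : E × C → Bool) (f : E) (c : C) : Prop := ω (f, c) = true ∧ 0 < μ f c

def surv (ends : E → Finset V) (μ : E → C → ℝ) (ω : E × C → Bool) (e : E) (c : C) : Prop :=
  ∀ f, Adj ends e f → ¬ sel μ ω f c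

def got (ends : E → Finset V) (μ : E → C → ℝ) (ω : E × C → Bool) (e : E) (c : C) : Prop :=
  sel μ ω e c ∧ ∀ f, Adj ends e f → f ≠ e → ¬ sel μ ω f c

def col (ends : E → Finset V) (μ : E → C → ℝ) (ω : E × C → Bool) (e : E) : Prop :=
  ∃ c, got ends μ ω e c

noncomputable def sv (ends : E → Finset V) (θ : ℝ) (μ : E → C → ℝ) (v : V) (c : C) : ℝ :=
  ∏ f, if v ∈ ends f then 1 - θ * μ f c else 1

noncomputable def aw (ends : E → Finset V) (θ : ℝ) (μ : E → C → ℝ) (e : E) (c : C) : ℝ :=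
  μ e c / ∏ v ∈ ends e, sv ends θ μ v c

noncomputable def newμ (ends : E → Finset V) (θ : ℝ) (μ : E → C → ℝ) (ω : E × C → Bool)
    (e : E) (c : C) : ℝ :=
  if surv ends μ ω e c ∧ ¬ col ends μ ω e then aw ends θ μ e c else 0

noncomputable def pB (θ : ℝ) (μ : E → C → ℝ) : E × C → Bool → ℝ :=
  fun x b => if b = true then θ * μ x.1 x.2 else 1 - θ * μ x.1 x.2

/-- basic hypotheses -/
structure Hyp (ends : E → Finset V) (θ : ℝ) (μ : E → C → ℝ) (M d : ℝ) : Prop where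
  G : IsG ends
  θ0 : 0 < θ
  θ1 : θ ≤ 1 / 2
  μ0 : ∀ e c, 0 ≤ μ e c
  μM : ∀ e c, μ e c ≤ M
  M0 : 0 < M
  d1 : d ≤ 1
  deg : ∀ v c, ∑ e ∈ univ.filter (fun e => v ∈ ends e), μ e c ≤ d

variable {ends : E → Finset V} {θ : ℝ} {μ : E → C → ℝ} {M d : ℝ}

lemma Hyp.μ1 (H : Hyp ends θ μ M d) (e : E) (c : C) : μ e c ≤ 1 := by
  obtain ⟨v, hv, -⟩ := H.G.adj_self e
  have h1 := Finset.single_le_sum (f := fun e => μ e c) (s := univ.filter (fun e => v ∈ ends e))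
    (fun k _ => H.μ0 k c) (mem_filter.2 ⟨mem_univ e, hv⟩)
  exact le_trans h1 (le_trans (H.deg v c) H.d1)

lemma Hyp.x0 (H : Hyp ends θ μ M d) (e : E) (c : C) : 0 ≤ θ * μ e c :=
  mul_nonneg H.θ0.le (H.μ0 e c)

lemma Hyp.x1 (H : Hyp ends θ μ M d) (e : E) (c : C) : θ * μ e c ≤ 1 / 2 := by
  nlinarith [H.μ1 e c, H.θ0, H.θ1, H.μ0 e c]

lemma Hyp.isP (H : Hyp ends θ μ M d) : IsP (pB θ μ) := by
  constructor
  · intro i b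
    unfold pB
    split_ifs
    · exact H.x0 _ _
    · linarith [H.x1 i.1 i.2]
  · intro i
    simp [pB]

lemma Hyp.sv_ge (H : Hyp ends θ μ M d) (v : V) (c : C) : 1 - θ ≤ sv ends θ μ v c := by
  have h1 := weier (univ.filter (fun f => v ∈ ends f)) (fun f => θ * μ f c) (fun f => H.x0 f c)
    (fun f => by linarith [H.x1 f c])
  unfold sv
  rw [Finset.prod_filter] at h1
  refine le_trans ?_ h1
  rw [← Finset.mul_sum]
  have := H.deg v c
  nlinarith [H.θ0, H.d1]

lemma Hyp.sv_half (H : Hyp ends θ μ M d) (v : V) (c : C) : 1 / 2 ≤ sv ends θ μ v c := by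
  linarith [H.sv_ge v c, H.θ1]

lemma Hyp.r_ge (H : Hyp ends θ μ M d) (e : E) (c : C) : 1 / 4 ≤ ∏ v ∈ ends e, sv ends θ μ v c := by
  obtain ⟨u, w, hne, he⟩ := card_eq_two.1 (H.G.card e)
  rw [he, Finset.prod_pair hne]
  nlinarith [H.sv_half u c, H.sv_half w c]

lemma Hyp.aw_le (H : Hyp ends θ μ M d) (e : E) (c : C) : aw ends θ μ e c ≤ 4 * μ e c := by
  unfold aw
  rw [div_le_iff₀ (by linarith [H.r_ge e c])]
  nlinarith [H.r_ge e c, H.μ0 e c]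

lemma Hyp.aw_nonneg (H : Hyp ends θ μ M d) (e : E) (c : C) : 0 ≤ aw ends θ μ e c :=
  div_nonneg (H.μ0 e c) (by linarith [H.r_ge e c])

lemma Hyp.Ex_sel (H : Hyp ends θ μ M d) (f : E) (c : C) :
    Ex (pB θ μ) (fun ω => ind (sel μ ω f c)) = θ * μ f c := by
  have := Ex_single H.isP (f, c) (fun b => ind (b = true ∧ 0 < μ f c))
  unfold sel
  rw [this]
  rcases (H.μ0 f c).lt_or_eq with h | h
  · simp [pB, ind, h]
  · simp [pB, ind, ← h]

lemma sel_dep (f : E) (c : C) : Dep (fun ω => sel μ ω f c) {(f, c)} := by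
  intro ω ω' h
  simp only [sel, h (f, c) (by simp)]

/-- survival probability at an edge -/
lemma Hyp.prod_adj_ge (H : Hyp ends θ μ M d) (e : E) (c : C) :
    ∏ v ∈ ends e, sv ends θ μ v c ≤ ∏ f, if Adj ends e f then 1 - θ * μ f c else 1 := by
  obtain ⟨u, w, hne, he⟩ := card_eq_two.1 (H.G.card e)
  rw [he, Finset.prod_pair hne]
  unfold sv
  rw [← Finset.prod_mul_distrib]
  refine Finset.prod_le_prod ?_ ?_
  · intro f _
    have := H.x1 f c
    split_ifs <;> nlinarith
  · intro f _
    have h1 := H.x1 f c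
    have h0 := H.x0 f c
    have : Adj ends e f ↔ (u ∈ ends f ∨ w ∈ ends f) := by simp [Adj, he]
    by_cases hu : u ∈ ends f <;> by_cases hw : w ∈ ends f <;> simp [this, hu, hw]
    nlinarith

lemma bad1 (H : Hyp ends θ μ M d) (e : E) (l η κ : ℝ) (hl : l ≤ ∑ c, μ e c) (hl2 : l ≤ 2)
    (hη : η ≤ 1) (hκ0 : 0 < κ) (hκ : 16 * κ ≤ η) :
    Ex (pB θ μ) (fun ω => ind (∑ c, aw ends θ μ e c * ind (surv ends μ ω e c) < l - η)) ≤
      Real.exp (-(κ * η / (8 * M))) := by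
  have hp := H.isP
  have hM := H.M0
  set lam : ℝ := -(κ / (4 * M)) with hlam
  have hlampos : 0 < κ / (4 * M) := by positivity
  set Y : C → E × C → (E × C → Bool) → ℝ := fun c j ω =>
    if c = j.2 ∧ Adj ends e j.1 then ind (sel μ ω j.1 j.2) else 0 with hY
  have hY0 : ∀ c j ω, 0 ≤ Y c j ω := by
    intro c j ω; simp only [hY]; split_ifs; exacts [ind_nonneg _, le_refl _]
  have hY1 : ∀ c j ω, Y c j ω ≤ 1 := by
    intro c j ω; simp only [hY]; split_ifs; exacts [ind_le_one _, zero_le_one]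
  have hEY : ∀ c j, Ex (pB θ μ) (Y c j) = if c = j.2 ∧ Adj ends e j.1 then θ * μ j.1 c else 0 := by
    intro c j
    simp only [hY]
    by_cases h : c = j.2 ∧ Adj ends e j.1
    · simp only [h, and_self, if_true]; exact H.Ex_sel _ _
    · simp only [h, if_false]; exact Ex_const hp 0
  have hc := conc hp (fun j : E × C => ({j} : Finset (E × C))) (by intro j k h; simpa using h)
    Y hY0 hY1 (by
      intro c j ω ω' h
      simp only [hY]
      have := sel_dep (μ := μ) j.1 j.2 ω ω' h
      dsimp only at this
      rw [this])
    (fun c => aw ends θ μ e c) (4 * M) lam (by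
      intro j ω
      have : ∀ c, aw ends θ μ e c * Y c j ω ≤ if c = j.2 then 4 * M else 0 := by
        intro c
        by_cases h : c = j.2
        · rw [if_pos h]
          have h1 := H.aw_le e c
          have h2 := H.aw_nonneg e c
          have h3 := H.μM e c
          have h4 := hY1 c j ω
          have h5 := hY0 c j ω
          nlinarith
        · simp [hY, h]
      refine le_trans (Finset.sum_le_sum fun c _ => this c) ?_
      simp)
    (by
      rw [hlam, abs_neg, abs_of_pos hlampos]
      field_simp
      linarith)
    univ (fun c => aw ends θ μ e c) (fun c => H.aw_nonneg e c) (fun c => le_refl _)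
  set tot := ∑ c, μ e c with htot
  set π : C → ℝ := fun c => ∏ j : E × C, (1 - Ex (pB θ μ) (Y c j)) with hπ
  have hπeq : ∀ c, π c = ∏ f, if Adj ends e f then 1 - θ * μ f c else 1 := by
    intro c
    simp only [hπ]
    rw [Fintype.prod_prod_type]
    refine Finset.prod_congr rfl fun f _ => ?_
    rw [Finset.prod_eq_single c]
    · rw [hEY]; by_cases h : Adj ends e f <;> simp [h]
    · intro c' _ hne; rw [hEY]; simp [Ne.symm hne]
    · simp
  have hmean : tot ≤ ∑ c, aw ends θ μ e c * π c := by
    refine Finset.sum_le_sum fun c _ => ?_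
    rw [hπeq]
    have h1 := H.prod_adj_ge e c
    have h2 := H.r_ge e c
    calc μ e c = aw ends θ μ e c * ∏ v ∈ ends e, sv ends θ μ v c := by
          unfold aw; rw [div_mul_cancel₀]; linarith
      _ ≤ _ := mul_le_mul_of_nonneg_left h1 (H.aw_nonneg e c)
  have hπ0 : ∀ c, 0 ≤ π c := by
    intro c; rw [hπeq]
    linarith [H.prod_adj_ge e c, H.r_ge e c]
  have hvar : ∑ c, aw ends θ μ e c * (1 - π c) ≤ 4 * tot := by
    rw [htot, Finset.mul_sum]
    refine Finset.sum_le_sum fun c _ => ?_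
    nlinarith [H.aw_le e c, H.aw_nonneg e c, hπ0 c]
  have hW : ∀ ω, ∑ c, aw ends θ μ e c * ∏ j : E × C, (1 - Y c j ω) ≤
      ∑ c, aw ends θ μ e c * ind (surv ends μ ω e c) := by
    intro ω
    refine Finset.sum_le_sum fun c _ => mul_le_mul_of_nonneg_left ?_ (H.aw_nonneg e c)
    by_cases h : surv ends μ ω e c
    · rw [ind_true h]
      exact Finset.prod_le_one (fun j _ => by linarith [hY1 c j ω]) (fun j _ => by linarith [hY0 c j ω])
    · rw [ind_false h]
      unfold surv at h
      push Not at h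
      obtain ⟨f, hf, hs⟩ := h
      refine le_of_eq (Finset.prod_eq_zero (mem_univ (f, c)) ?_)
      simp [hY, hf, ind_true hs]
  have hmk := markov hp (fun ω => ∑ c, aw ends θ μ e c * ind (surv ends μ ω e c) < l - η)
    (fun ω => (κ / (4 * M)) * (l - η) + lam * ∑ c, aw ends θ μ e c * ∏ j : E × C, (1 - Y c j ω)) (by
      intro ω h
      have := hW ω
      rw [hlam]
      have h3 : ∑ c, aw ends θ μ e c * ∏ j : E × C, (1 - Y c j ω) ≤ l - η := by linarith
      nlinarith)
  refine le_trans hmk ?_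
  simp_rw [Real.exp_add]
  rw [Ex_const_mul]
  refine le_trans (mul_le_mul_of_nonneg_left hc (Real.exp_pos _).le) ?_
  rw [← Real.exp_add]
  refine Real.exp_le_exp.2 ?_
  have e1 : lam ^ 2 * (4 * M) = (κ / (4 * M)) * κ := by
    rw [hlam]; field_simp
  have e2 : -(κ * η / (8 * M)) = (κ / (4 * M)) * (-(η / 2)) := by field_simp; ring
  rw [e1, e2, hlam]
  have : (l - η) - ∑ c, aw ends θ μ e c * π c + κ * ∑ c, aw ends θ μ e c * (1 - π c) ≤ -(η / 2) := by
    have h1 : κ * ∑ c, aw ends θ μ e c * (1 - π c) ≤ κ * (4 * tot) :=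
      mul_le_mul_of_nonneg_left hvar hκ0.le
    nlinarith
  nlinarith

end Step
end Nib

namespace Nib
open Finset Classical

section Step2
variable {V E C : Type} [Fintype V] [Fintype E] [Fintype C] [Nonempty C]
variable {ends : E → Finset V} {θ : ℝ} {μ : E → C → ℝ} {M d : ℝ}

lemma Hyp.Ex_got (H : Hyp ends θ μ M d) (e : E) (c : C) :
    θ * (1 - 2 * θ) * μ e c ≤ Ex (pB θ μ) (fun ω => ind (got ends μ ω e c)) := by
  have hp := H.isP
  set N := univ.filter (fun f => Adj ends e f ∧ f ≠ e) with hN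
  have h1 : ∀ ω, ind (sel μ ω e c) - ∑ f ∈ N, ind (sel μ ω e c) * ind (sel μ ω f c) ≤
      ind (got ends μ ω e c) := by
    intro ω
    have hnn : ∀ f ∈ N, 0 ≤ ind (sel μ ω e c) * ind (sel μ ω f c) := fun f _ =>
      mul_nonneg (ind_nonneg _) (ind_nonneg _)
    have hs := Finset.sum_nonneg hnn
    by_cases hg : got ends μ ω e c
    · rw [ind_true hg]
      linarith [ind_le_one (sel μ ω e c)]
    · rw [ind_false hg]
      by_cases hse : sel μ ω e c
      · unfold got at hg
        push Not at hg
        obtain ⟨f, hf, hne, hsf⟩ := hg hse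
        have := Finset.single_le_sum hnn (mem_filter.2 ⟨mem_univ f, hf, hne⟩)
        rw [ind_true hse, ind_true hsf] at this
        rw [ind_true hse]
        linarith
      · simp [ind_false hse]
  refine le_trans ?_ (Ex_mono hp h1)
  rw [Ex_sub, Ex_sum, H.Ex_sel]
  have h2 : ∀ f ∈ N, Ex (pB θ μ) (fun ω => ind (sel μ ω e c) * ind (sel μ ω f c)) =
      θ * μ e c * (θ * μ f c) := by
    intro f hf
    rw [Ex_indep hp (S := {(e, c)}) (T := {(f, c)}), H.Ex_sel, H.Ex_sel]
    · intro ω ω' h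
      have := sel_dep (μ := μ) e c ω ω' h
      dsimp only at this ⊢
      rw [this]
    · intro ω ω' h
      have := sel_dep (μ := μ) f c ω ω' h
      dsimp only at this ⊢
      rw [this]
    · have := (mem_filter.1 hf).2.2
      simp [Ne.symm this]
  rw [Finset.sum_congr rfl h2, ← Finset.mul_sum, ← Finset.mul_sum]
  have h3 : ∑ f ∈ N, μ f c ≤ 2 * d := by
    refine le_trans ?_ (adj_sum_le H.G e (fun f => μ f c) (fun f => H.μ0 f c) d (fun v => H.deg v c))
    refine Finset.sum_le_sum_of_subset_of_nonneg ?_ fun f _ _ => H.μ0 f c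
    intro f hf
    simp only [hN, mem_filter] at hf ⊢
    exact ⟨hf.1, hf.2.1⟩
  have h4 : ∑ f ∈ N, μ f c ≤ 2 := by linarith [H.d1]
  have h5 := H.x0 e c
  have h6 : θ * μ e c * (θ * ∑ f ∈ N, μ f c) ≤ θ * μ e c * (θ * 2) :=
    mul_le_mul_of_nonneg_left (mul_le_mul_of_nonneg_left h4 H.θ0.le) h5
  linarith

lemma Hyp.r_eq (H : Hyp ends θ μ M d) (e : E) (v : V) (hv : v ∈ ends e) (c : C) :
    ∏ v ∈ ends e, sv ends θ μ v c = sv ends θ μ v c * ((1 - θ * μ e c) *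
      ∏ f, if v ∉ ends f ∧ Adj ends e f then 1 - θ * μ f c else 1) := by
  have hex : ∃ w, v ≠ w ∧ ends e = {v, w} := by
    obtain ⟨u, w, hne, he⟩ := card_eq_two.1 (H.G.card e)
    rw [he] at hv
    simp only [mem_insert, mem_singleton] at hv
    rcases hv with rfl | rfl
    · exact ⟨w, hne, he⟩
    · exact ⟨u, hne.symm, by rw [he, Finset.pair_comm]⟩
  obtain ⟨w, hne, he⟩ := hex
  rw [he, Finset.prod_pair hne]
  congr 1
  have h1 : (1 - θ * μ e c) = ∏ f, if f = e then 1 - θ * μ f c else 1 := by simp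
  rw [h1, ← Finset.prod_mul_distrib]
  unfold sv
  refine Finset.prod_congr rfl fun f _ => ?_
  have hadj : Adj ends e f ↔ (v ∈ ends f ∨ w ∈ ends f) := by simp [Adj, he]
  by_cases hfe : f = e
  · subst hfe
    have hw : w ∈ ends f := by rw [he]; simp
    simp [hw, hv]
  · by_cases hw : w ∈ ends f
    · have hvf : v ∉ ends f := by
        intro hvf
        apply hfe
        apply H.G.inj
        symm
        apply Finset.eq_of_subset_of_card_le
        · rw [he]; intro x hx
          simp only [mem_insert, mem_singleton] at hx
          rcases hx with rfl | rfl <;> assumption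
        · rw [H.G.card, H.G.card]
      simp [hfe, hw, hvf, hadj]
    · by_cases hvf : v ∈ ends f <;> simp [hfe, hw, hvf, hadj]

lemma bad2 (H : Hyp ends θ μ M d) (v : V) (c : C) (l η κ K d' : ℝ) (hM1 : M ≤ 1)
    (hl : ∀ e, 0 < μ e c → l ≤ ∑ c', μ e c') (hK0 : 0 ≤ K)
    (hK : Real.exp (-(θ * (1 - 2 * θ) * (l - M))) ≤ K * ((1 - θ) * (1 - θ * M)))
    (hd' : K * d + η ≤ d') (hκ0 : 0 < κ) (hκ1 : κ ≤ 1) (hκ : 8 * κ ≤ η) :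
    Ex (pB θ μ) (fun ω => ind (d' < ∑ e ∈ univ.filter (fun e => v ∈ ends e), newμ ends θ μ ω e c)) ≤
      Real.exp (-(κ * η / (16 * M))) := by
  have hp := H.isP
  have hM := H.M0
  have hθ0 := H.θ0
  have hθ1 := H.θ1
  set lam : ℝ := κ / (8 * M) with hlam
  have hlampos : 0 < lam := by positivity
  set b : E → ℝ := fun e => if v ∈ ends e then aw ends θ μ e c else 0 with hb
  have hb0 : ∀ e, 0 ≤ b e := by
    intro e; simp only [hb]; split_ifs; exacts [H.aw_nonneg _ _, le_refl _]
  have hbM : ∀ e, b e ≤ 4 * M := by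
    intro e; simp only [hb]; split_ifs
    · linarith [H.aw_le e c, H.μM e c]
    · linarith
  set Y : E → E ⊕ C → (E × C → Bool) → ℝ := fun e j ω =>
    match j with
    | Sum.inl f => if v ∉ ends f ∧ Adj ends e f then ind (sel μ ω f c) else 0
    | Sum.inr c' => if c' = c then 0 else ind (got ends μ ω e c') with hY
  have hYl : ∀ e f ω, Y e (Sum.inl f) ω = if v ∉ ends f ∧ Adj ends e f then ind (sel μ ω f c) else 0 :=
    fun e f ω => rfl
  have hYr : ∀ e c' ω, Y e (Sum.inr c') ω = if c' = c then 0 else ind (got ends μ ω e c') :=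
    fun e c' ω => rfl
  have hY0 : ∀ e j ω, 0 ≤ Y e j ω := by
    rintro e (f | c') ω
    · rw [hYl]; split_ifs; exacts [ind_nonneg _, le_refl _]
    · rw [hYr]; split_ifs; exacts [le_refl _, ind_nonneg _]
  have hY1 : ∀ e j ω, Y e j ω ≤ 1 := by
    rintro e (f | c') ω
    · rw [hYl]; split_ifs; exacts [ind_le_one _, zero_le_one]
    · rw [hYr]; split_ifs; exacts [zero_le_one, ind_le_one _]
  set S : E ⊕ C → Finset (E × C) := fun j =>
    match j with
    | Sum.inl f => {(f, c)}
    | Sum.inr c' => if c' = c then ∅ else univ.filter (fun x => x.2 = c') with hS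
  have hSl : ∀ f, S (Sum.inl f) = {(f, c)} := fun f => rfl
  have hSr : ∀ c', S (Sum.inr c') = if c' = c then ∅ else univ.filter (fun x => x.2 = c') :=
    fun c' => rfl
  have hSd : ∀ j k, j ≠ k → Disjoint (S j) (S k) := by
    rintro (f | c1) (g | c2) hne
    · rw [hSl, hSl]
      have : f ≠ g := fun h => hne (by rw [h])
      simpa using this
    · rw [hSl, hSr]
      split_ifs with h
      · simp
      · simp [Ne.symm h]
    · rw [hSl, hSr]
      split_ifs with h
      · simp
      · simp [Ne.symm h]
    · rw [hSr, hSr]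
      have : c1 ≠ c2 := fun h => hne (by rw [h])
      split_ifs with h1 h2 h2
      · simp
      · simp
      · simp
      · rw [Finset.disjoint_left]
        intro x hx hx'
        exact this ((mem_filter.1 hx).2.symm.trans (mem_filter.1 hx').2)
  have hYd : ∀ e j, Dep (Y e j) (S j) := by
    rintro e (f | c') ω ω' h
    · rw [hYl, hYl]
      have := sel_dep (μ := μ) f c ω ω' h
      dsimp only at this
      rw [this]
    · rw [hYr, hYr]
      split_ifs with hc
      · rfl
      · rw [hSr, if_neg hc] at h
        have hsel : ∀ f, sel μ ω f c' = sel μ ω' f c' := fun f =>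
          sel_dep (μ := μ) f c' ω ω' (fun i hi => h i (by
            rw [mem_singleton] at hi; simp [hi]))
        simp only [got, hsel]
  have hhit : ∀ j ω, ∑ e, b e * Y e j ω ≤ 8 * M := by
    rintro (f | c') ω
    · -- edges hit by one edge avoiding v
      by_cases hvf : v ∈ ends f
      · have : ∀ e, b e * Y e (Sum.inl f) ω = 0 := by intro e; rw [hYl]; simp [hvf]
        simp only [this, Finset.sum_const_zero]; linarith
      have h1 : ∀ e, b e * Y e (Sum.inl f) ω ≤ ∑ w ∈ ends f, if ends e = {v, w} then 4 * M else 0 := by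
        intro e
        have hnn : ∀ w ∈ ends f, 0 ≤ (if ends e = {v, w} then 4 * M else 0) := by
          intro w _; split_ifs <;> linarith
        by_cases hve : v ∈ ends e
        swap
        · simp only [hb, hve, if_false, zero_mul]; exact Finset.sum_nonneg hnn
        by_cases hadj : Adj ends e f
        swap
        · rw [hYl]; simp only [hadj, and_false, if_false, mul_zero]; exact Finset.sum_nonneg hnn
        obtain ⟨w, hwe, hwf⟩ := hadj
        have hvw : v ≠ w := fun h => hvf (h ▸ hwf)
        have hee : ends e = {v, w} := by
          symm
          apply Finset.eq_of_subset_of_card_le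
          · intro x hx
            simp only [mem_insert, mem_singleton] at hx
            rcases hx with rfl | rfl <;> assumption
          · rw [H.G.card, Finset.card_pair hvw]
        have h2 := Finset.single_le_sum hnn hwf
        rw [if_pos hee] at h2
        refine le_trans ?_ h2
        have := hY1 e (Sum.inl f) ω
        have := hY0 e (Sum.inl f) ω
        nlinarith [hbM e, hb0 e]
      refine le_trans (Finset.sum_le_sum fun e _ => h1 e) ?_
      rw [Finset.sum_comm]
      have h3 : ∀ w ∈ ends f, ∑ e, (if ends e = {v, w} then 4 * M else 0) ≤ 4 * M := by
        intro w _
        by_cases hex : ∃ e0, ends e0 = {v, w}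
        · obtain ⟨e0, he0⟩ := hex
          rw [Finset.sum_eq_single e0]
          · rw [if_pos he0]
          · intro e _ hne
            rw [if_neg]
            intro h; exact hne (H.G.inj (h.trans he0.symm))
          · simp
        · push Not at hex
          simp only [hex, if_false, Finset.sum_const_zero]; linarith
      refine le_trans (Finset.sum_le_sum h3) ?_
      rw [Finset.sum_const, H.G.card]
      simp; linarith
    · by_cases hc : c' = c
      · have : ∀ e, b e * Y e (Sum.inr c') ω = 0 := by intro e; rw [hYr]; simp [hc]
        simp only [this, Finset.sum_const_zero]; linarith
      by_cases hex : ∃ e0, v ∈ ends e0 ∧ got ends μ ω e0 c'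
      · obtain ⟨e0, hv0, hg0⟩ := hex
        rw [Finset.sum_eq_single e0]
        · have := hY1 e0 (Sum.inr c') ω
          have := hY0 e0 (Sum.inr c') ω
          nlinarith [hbM e0, hb0 e0]
        · intro e _ hne
          by_cases hve : v ∈ ends e
          · have : ¬ got ends μ ω e c' := fun hg =>
              hg0.2 e ⟨v, hv0, hve⟩ hne hg.1
            rw [hYr, if_neg hc, ind_false this, mul_zero]
          · simp [hb, hve]
        · simp
      · push Not at hex
        have : ∀ e, b e * Y e (Sum.inr c') ω = 0 := by
          intro e
          by_cases hve : v ∈ ends e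
          · rw [hYr, if_neg hc, ind_false (hex e hve), mul_zero]
          · simp [hb, hve]
        simp only [this, Finset.sum_const_zero]; linarith
  have hc := conc hp S hSd Y hY0 hY1 hYd b (8 * M) lam hhit
    (by
      rw [abs_of_pos hlampos, hlam]
      field_simp
      linarith)
    univ b hb0 (fun e => le_refl _)
  set π : E → ℝ := fun e => ∏ j : E ⊕ C, (1 - Ex (pB θ μ) (Y e j)) with hπ
  have hEY0 : ∀ e j, 0 ≤ Ex (pB θ μ) (Y e j) := fun e j => Ex_nonneg hp (hY0 e j)
  have hEY1 : ∀ e j, Ex (pB θ μ) (Y e j) ≤ 1 := fun e j =>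
    le_trans (Ex_mono hp (hY1 e j)) (Ex_const hp 1).le
  have hπ0 : ∀ e, 0 ≤ π e := fun e => Finset.prod_nonneg fun j _ => by linarith [hEY1 e j]
  have hmean : ∀ e, b e * π e ≤ if v ∈ ends e then K * μ e c else 0 := by
    intro e
    by_cases hve : v ∈ ends e
    swap
    · simp [hb, hve]
    rw [if_pos hve]
    have hbe : b e = aw ends θ μ e c := by simp only [hb, hve, if_true]
    rcases (H.μ0 e c).lt_or_eq with hpos | hzero
    swap
    · rw [hbe]
      have : aw ends θ μ e c = 0 := by unfold aw; rw [← hzero]; simp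
      rw [this, ← hzero]; simp
    set F := ∏ f, (if v ∉ ends f ∧ Adj ends e f then 1 - θ * μ f c else 1) with hF
    set Q := ∏ c', (1 - Ex (pB θ μ) (Y e (Sum.inr c'))) with hQ
    have hπe : π e = F * Q := by
      simp only [hπ]
      rw [Fintype.prod_sum_type]
      congr 1
      refine Finset.prod_congr rfl fun f _ => ?_
      by_cases h : v ∉ ends f ∧ Adj ends e f
      · rw [if_pos h]
        have : Y e (Sum.inl f) = fun ω => ind (sel μ ω f c) := by
          funext ω; rw [hYl, if_pos h]
        rw [this, H.Ex_sel]
      · rw [if_neg h]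
        have : Y e (Sum.inl f) = fun ω => 0 := by
          funext ω; rw [hYl, if_neg h]
        rw [this, Ex_const hp, sub_zero]
    have hF0 : 0 ≤ F := Finset.prod_nonneg fun f _ => by
      have := H.x1 f c
      split_ifs <;> linarith
    have hQle : Q ≤ Real.exp (-(θ * (1 - 2 * θ) * (l - M))) := by
      have h1 : Q ≤ ∏ c', Real.exp (- Ex (pB θ μ) (Y e (Sum.inr c'))) := by
        refine Finset.prod_le_prod (fun c' _ => by linarith [hEY1 e (Sum.inr c')]) fun c' _ => ?_
        have := Real.add_one_le_exp (- Ex (pB θ μ) (Y e (Sum.inr c')))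
        linarith
      rw [← Real.exp_sum] at h1
      refine le_trans h1 (Real.exp_le_exp.2 ?_)
      rw [Finset.sum_neg_distrib]
      refine neg_le_neg ?_
      have h2 : ∀ c', θ * (1 - 2 * θ) * (μ e c' - if c' = c then μ e c else 0) ≤
          Ex (pB θ μ) (Y e (Sum.inr c')) := by
        intro c'
        by_cases hcc : c' = c
        · rw [if_pos hcc, hcc]
          simp only [sub_self, mul_zero]
          exact hEY0 e (Sum.inr c)
        · rw [if_neg hcc, sub_zero]
          have : Y e (Sum.inr c') = fun ω => ind (got ends μ ω e c') := by
            funext ω; rw [hYr, if_neg hcc]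
          rw [this]
          exact H.Ex_got e c'
      refine le_trans ?_ (Finset.sum_le_sum fun c' _ => h2 c')
      rw [← Finset.mul_sum, Finset.sum_sub_distrib]
      simp only [Finset.sum_ite_eq', mem_univ, if_true]
      refine mul_le_mul_of_nonneg_left ?_ (mul_nonneg hθ0.le (by linarith))
      linarith [hl e hpos, H.μM e c]
    have hr := H.r_eq e v hve c
    have hr4 := H.r_ge e c
    have haw : aw ends θ μ e c * (sv ends θ μ v c * ((1 - θ * μ e c) * F)) = μ e c := by
      rw [← hr]; unfold aw; rw [div_mul_cancel₀]; linarith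
    rw [hbe, hπe]
    have ha0 := H.aw_nonneg e c
    have hsv := H.sv_ge v c
    have hxM : 1 - θ * M ≤ 1 - θ * μ e c := by
      have := mul_le_mul_of_nonneg_left (H.μM e c) hθ0.le; linarith
    have hxM0 : 0 ≤ 1 - θ * M := by nlinarith
    have hprod : (1 - θ) * (1 - θ * M) ≤ sv ends θ μ v c * (1 - θ * μ e c) :=
      mul_le_mul hsv hxM hxM0 (by linarith)
    calc aw ends θ μ e c * (F * Q) = (aw ends θ μ e c * F) * Q := by ring
      _ ≤ (aw ends θ μ e c * F) * (K * ((1 - θ) * (1 - θ * M))) :=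
        mul_le_mul_of_nonneg_left (hQle.trans hK) (mul_nonneg ha0 hF0)
      _ = K * ((aw ends θ μ e c * F) * ((1 - θ) * (1 - θ * M))) := by ring
      _ ≤ K * ((aw ends θ μ e c * F) * (sv ends θ μ v c * (1 - θ * μ e c))) :=
        mul_le_mul_of_nonneg_left (mul_le_mul_of_nonneg_left hprod (mul_nonneg ha0 hF0)) hK0
      _ = K * (aw ends θ μ e c * (sv ends θ μ v c * ((1 - θ * μ e c) * F))) := by ring
      _ = K * μ e c := by rw [haw]
  have hmeanT : ∑ e, b e * π e ≤ K * d := by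
    refine le_trans (Finset.sum_le_sum fun e _ => hmean e) ?_
    rw [← Finset.sum_filter, ← Finset.mul_sum]
    exact mul_le_mul_of_nonneg_left (H.deg v c) hK0
  have hvar : ∑ e, b e * (1 - π e) ≤ 4 := by
    have h1 : ∀ e, b e * (1 - π e) ≤ if v ∈ ends e then 4 * μ e c else 0 := by
      intro e
      by_cases hve : v ∈ ends e
      · simp only [hb, hve, if_true]
        nlinarith [H.aw_le e c, H.aw_nonneg e c, hπ0 e]
      · simp [hb, hve]
    refine le_trans (Finset.sum_le_sum fun e _ => h1 e) ?_
    rw [← Finset.sum_filter, ← Finset.mul_sum]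
    linarith [H.deg v c, H.d1]
  have hW : ∀ ω, ∑ e ∈ univ.filter (fun e => v ∈ ends e), newμ ends θ μ ω e c ≤
      ∑ e, b e * ∏ j : E ⊕ C, (1 - Y e j ω) := by
    intro ω
    rw [Finset.sum_filter]
    refine Finset.sum_le_sum fun e _ => ?_
    have hnn : 0 ≤ ∏ j : E ⊕ C, (1 - Y e j ω) :=
      Finset.prod_nonneg fun j _ => by linarith [hY1 e j ω]
    by_cases hve : v ∈ ends e
    swap
    · simp [hb, hve]
    rw [if_pos hve]
    unfold newμ
    split_ifs with hs
    · have : ∀ j, Y e j ω = 0 := by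
        rintro (f | c')
        · rw [hYl]
          split_ifs with hh
          · exact ind_false (hs.1 f hh.2)
          · rfl
        · rw [hYr]
          split_ifs with hh
          · rfl
          · exact ind_false (fun hg => hs.2 ⟨c', hg⟩)
      simp [this, hb, hve]
    · exact mul_nonneg (hb0 e) hnn
  have hmk := markov hp
    (fun ω => d' < ∑ e ∈ univ.filter (fun e => v ∈ ends e), newμ ends θ μ ω e c)
    (fun ω => (-lam) * d' + lam * ∑ e, b e * ∏ j : E ⊕ C, (1 - Y e j ω)) (by
      intro ω h
      have := hW ω
      have h3 : d' ≤ ∑ e, b e * ∏ j : E ⊕ C, (1 - Y e j ω) := by linarith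
      nlinarith)
  refine le_trans hmk ?_
  simp_rw [Real.exp_add]
  rw [Ex_const_mul]
  refine le_trans (mul_le_mul_of_nonneg_left hc (Real.exp_pos _).le) ?_
  rw [← Real.exp_add]
  refine Real.exp_le_exp.2 ?_
  have e1 : lam ^ 2 * (8 * M) = lam * κ := by
    rw [hlam]; field_simp
  have e2 : -(κ * η / (16 * M)) = lam * (-(η / 2)) := by rw [hlam]; field_simp; ring
  rw [e1, e2]
  have : -d' + ∑ e, b e * π e + κ * ∑ e, b e * (1 - π e) ≤ -(η / 2) := by
    have h1 : κ * ∑ e, b e * (1 - π e) ≤ κ * 4 := mul_le_mul_of_nonneg_left hvar hκ0.le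
    nlinarith
  nlinarith

end Step2
end Nib

namespace Nib
open Finset Classical

section Step3
variable {V E C : Type} [Fintype V] [Fintype E] [Fintype C] [Nonempty C]
variable {ends : E → Finset V} {θ : ℝ} {μ : E → C → ℝ} {M d : ℝ}

noncomputable def vr1 (ends : E → Finset V) (μ : E → C → ℝ) (e : E) : Finset (E × C) :=
  univ.filter (fun x => Adj ends e x.1 ∧ 0 < μ x.1 x.2 ∧ 0 < μ e x.2)

noncomputable def vr2 (ends : E → Finset V) (μ : E → C → ℝ) (v : V) (c : C) : Finset (E × C) :=
  (univ.filter (fun e => v ∈ ends e ∧ 0 < μ e c)).biUnion (vr1 ends μ)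

noncomputable def vr (ends : E → Finset V) (μ : E → C → ℝ) : E ⊕ (V × C) → Finset (E × C)
  | Sum.inl e => vr1 ends μ e
  | Sum.inr z => vr2 ends μ z.1 z.2

lemma adj_card (hG : IsG ends) {N : ℕ}
    (hN2 : ∀ v c, (univ.filter (fun e => v ∈ ends e ∧ 0 < μ e c)).card ≤ N) (e : E) (c : C) :
    (univ.filter (fun f => Adj ends e f ∧ 0 < μ f c)).card ≤ 2 * N := by
  have hsub : univ.filter (fun f => Adj ends e f ∧ 0 < μ f c) ⊆
      (ends e).biUnion (fun v => univ.filter (fun f => v ∈ ends f ∧ 0 < μ f c)) := by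
    intro f hf
    obtain ⟨-, ⟨v, h1, h2⟩, h3⟩ := mem_filter.1 hf
    exact mem_biUnion.2 ⟨v, h1, mem_filter.2 ⟨mem_univ _, h2, h3⟩⟩
  refine le_trans (card_le_card hsub) ?_
  have := Finset.card_biUnion_le_card_mul (ends e)
    (fun v => univ.filter (fun f => v ∈ ends f ∧ 0 < μ f c)) N (fun v _ => hN2 v c)
  rwa [hG.card] at this

lemma vr1_card (hG : IsG ends) {N : ℕ} (hN1 : ∀ e, (univ.filter (fun c => 0 < μ e c)).card ≤ N)
    (hN2 : ∀ v c, (univ.filter (fun e => v ∈ ends e ∧ 0 < μ e c)).card ≤ N) (e : E) :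
    (vr1 ends μ e).card ≤ N * (2 * N) := by
  have hsub : vr1 ends μ e ⊆ (univ.filter (fun c => 0 < μ e c)).biUnion
      (fun c => (univ.filter (fun f => Adj ends e f ∧ 0 < μ f c)).image (fun f => (f, c))) := by
    rintro ⟨f, c⟩ hx
    obtain ⟨-, h1, h2, h3⟩ := mem_filter.1 hx
    refine mem_biUnion.2 ⟨c, mem_filter.2 ⟨mem_univ _, h3⟩, mem_image.2 ⟨f, ?_, rfl⟩⟩
    exact mem_filter.2 ⟨mem_univ _, h1, h2⟩
  refine le_trans (card_le_card hsub) ?_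
  refine le_trans (Finset.card_biUnion_le_card_mul _ _ (2 * N) (fun c _ =>
    le_trans card_image_le (adj_card hG hN2 e c))) ?_
  exact Nat.mul_le_mul_right _ (hN1 e)

lemma vr_card (hG : IsG ends) {N : ℕ} (hN : 1 ≤ N)
    (hN1 : ∀ e, (univ.filter (fun c => 0 < μ e c)).card ≤ N)
    (hN2 : ∀ v c, (univ.filter (fun e => v ∈ ends e ∧ 0 < μ e c)).card ≤ N) (b : E ⊕ (V × C)) :
    (vr ends μ b).card ≤ N * (N * (2 * N)) := by
  rcases b with e | ⟨v, c⟩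
  · refine le_trans (vr1_card hG hN1 hN2 e) ?_
    exact Nat.le_mul_of_pos_left _ hN
  · refine le_trans (Finset.card_biUnion_le_card_mul _ _ (N * (2 * N)) (fun e _ =>
      vr1_card hG hN1 hN2 e)) ?_
    exact Nat.mul_le_mul_right _ (hN2 v c)

lemma vr_back (hG : IsG ends) {N : ℕ} (hN : 1 ≤ N)
    (hN1 : ∀ e, (univ.filter (fun c => 0 < μ e c)).card ≤ N)
    (hN2 : ∀ v c, (univ.filter (fun e => v ∈ ends e ∧ 0 < μ e c)).card ≤ N) (x : E × C) :
    (univ.filter (fun b => x ∈ vr ends μ b)).card ≤ 6 * N ^ 2 := by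
  set Ne := univ.filter (fun e => Adj ends x.1 e ∧ 0 < μ e x.2) with hNe
  have hcard : Ne.card ≤ 2 * N := adj_card hG hN2 x.1 x.2
  have hsub : univ.filter (fun b => x ∈ vr ends μ b) ⊆ Ne.image Sum.inl ∪
      (Ne.biUnion (fun e => (ends e) ×ˢ (univ.filter (fun c => 0 < μ e c)))).image Sum.inr := by
    rintro (e | ⟨v, c⟩) hb
    · have hx : x ∈ vr1 ends μ e := (mem_filter.1 hb).2
      obtain ⟨-, h1, h2, h3⟩ := mem_filter.1 hx
      exact mem_union_left _ (mem_image.2 ⟨e, mem_filter.2 ⟨mem_univ _, h1.symm, h3⟩, rfl⟩)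
    · have hx : x ∈ vr2 ends μ v c := (mem_filter.1 hb).2
      obtain ⟨e, he, hx1⟩ := mem_biUnion.1 hx
      obtain ⟨-, h1, h2, h3⟩ := mem_filter.1 hx1
      obtain ⟨-, h4, h5⟩ := mem_filter.1 he
      refine mem_union_right _ (mem_image.2 ⟨(v, c), mem_biUnion.2
        ⟨e, mem_filter.2 ⟨mem_univ _, h1.symm, h3⟩, ?_⟩, rfl⟩)
      exact mem_product.2 ⟨h4, mem_filter.2 ⟨mem_univ _, h5⟩⟩
  refine le_trans (card_le_card hsub) (le_trans (card_union_le _ _) ?_)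
  have h1 : (Ne.image (Sum.inl : E → E ⊕ (V × C))).card ≤ 2 * N := le_trans card_image_le hcard
  have h2 : ((Ne.biUnion (fun e => (ends e) ×ˢ (univ.filter (fun c => 0 < μ e c)))).image
      (Sum.inr : V × C → E ⊕ (V × C))).card ≤ (2 * N) * (2 * N) := by
    refine le_trans card_image_le ?_
    refine le_trans (Finset.card_biUnion_le_card_mul _ _ (2 * N) (fun e _ => ?_)) ?_
    · rw [card_product, hG.card]
      exact Nat.mul_le_mul_left _ (hN1 e)
    · exact Nat.mul_le_mul_right _ hcard
  nlinarith

lemma vr_nbr (hG : IsG ends) {N : ℕ} (hN : 1 ≤ N)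
    (hN1 : ∀ e, (univ.filter (fun c => 0 < μ e c)).card ≤ N)
    (hN2 : ∀ v c, (univ.filter (fun e => v ∈ ends e ∧ 0 < μ e c)).card ≤ N) (b : E ⊕ (V × C)) :
    (univ.filter (fun b' => ¬ Disjoint (vr ends μ b) (vr ends μ b'))).card ≤ 12 * N ^ 5 := by
  have hsub : univ.filter (fun b' => ¬ Disjoint (vr ends μ b) (vr ends μ b')) ⊆
      (vr ends μ b).biUnion (fun x => univ.filter (fun b' => x ∈ vr ends μ b')) := by
    intro b' hb'
    obtain ⟨x, h1, h2⟩ := Finset.not_disjoint_iff.1 (mem_filter.1 hb').2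
    exact mem_biUnion.2 ⟨x, h1, mem_filter.2 ⟨mem_univ _, h2⟩⟩
  refine le_trans (card_le_card hsub) ?_
  refine le_trans (Finset.card_biUnion_le_card_mul _ _ (6 * N ^ 2)
    (fun x _ => vr_back hG hN hN1 hN2 x)) ?_
  refine le_trans (Nat.mul_le_mul_right _ (vr_card hG hN hN1 hN2 b)) (le_of_eq ?_)
  ring

lemma sel_congr {ω ω' : E × C → Bool} {f : E} {c : C}
    (h : 0 < μ f c → ω (f, c) = ω' (f, c)) : sel μ ω f c ↔ sel μ ω' f c := by
  unfold sel
  constructor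
  · rintro ⟨h1, h2⟩; exact ⟨(h h2) ▸ h1, h2⟩
  · rintro ⟨h1, h2⟩; exact ⟨(h h2) ▸ h1, h2⟩

lemma surv_congr {ω ω' : E × C → Bool} {e : E} {c : C} (hc : 0 < μ e c)
    (h : ∀ i ∈ vr1 ends μ e, ω i = ω' i) : surv ends μ ω e c ↔ surv ends μ ω' e c := by
  unfold surv
  refine forall₂_congr fun f hf => ?_
  rw [sel_congr fun hpos => h (f, c) (mem_filter.2 ⟨mem_univ _, hf, hpos, hc⟩)]

lemma col_congr (hG : IsG ends) {ω ω' : E × C → Bool} {e : E}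
    (h : ∀ i ∈ vr1 ends μ e, ω i = ω' i) : col ends μ ω e ↔ col ends μ ω' e := by
  unfold col
  refine exists_congr fun c => ?_
  by_cases hc : 0 < μ e c
  · unfold got
    rw [sel_congr fun hpos => h (e, c) (mem_filter.2 ⟨mem_univ _, hG.adj_self e, hpos, hc⟩)]
    refine and_congr_right fun _ => forall₃_congr fun f hf _ => ?_
    rw [sel_congr fun hpos => h (f, c) (mem_filter.2 ⟨mem_univ _, hf, hpos, hc⟩)]
  · constructor
    · intro hg; exact absurd hg.1.2 hc
    · intro hg; exact absurd hg.1.2 hc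

lemma Hyp.aw_zero (H : Hyp ends θ μ M d) {e : E} {c : C} (h : ¬ 0 < μ e c) : aw ends θ μ e c = 0 := by
  have : μ e c = 0 := le_antisymm (not_lt.1 h) (H.μ0 e c)
  simp [aw, this]

lemma step (H : Hyp ends θ μ M d) (A : Finset E) {N : ℕ} (hN : 1 ≤ N)
    (hN1 : ∀ e, (univ.filter (fun c => 0 < μ e c)).card ≤ N)
    (hN2 : ∀ v c, (univ.filter (fun e => v ∈ ends e ∧ 0 < μ e c)).card ≤ N)
    (hA : ∀ e c, 0 < μ e c → e ∈ A) (l η κ K d' : ℝ) (hM1 : M ≤ 1)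
    (hl : ∀ e ∈ A, l ≤ ∑ c, μ e c) (hl2 : l ≤ 2) (hη : η ≤ 1) (hκ0 : 0 < κ) (hκ : 16 * κ ≤ η)
    (hK0 : 0 ≤ K)
    (hK : Real.exp (-(θ * (1 - 2 * θ) * (l - M))) ≤ K * ((1 - θ) * (1 - θ * M)))
    (hd' : K * d + η ≤ d')
    (hP : 48 * (N : ℝ) ^ 5 * Real.exp (-(κ * η / (16 * M))) ≤ 1) :
    ∃ ω, (∀ e ∈ A, l - η ≤ ∑ c, aw ends θ μ e c * ind (surv ends μ ω e c)) ∧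
      ∀ v c, ∑ e ∈ univ.filter (fun e => v ∈ ends e), newμ ends θ μ ω e c ≤ d' := by
  have hp := H.isP
  have hM := H.M0
  have hη0 : 0 < η := by linarith
  set P := Real.exp (-(κ * η / (16 * M))) with hPdef
  have hP0 : 0 < P := Real.exp_pos _
  set bad : E ⊕ (V × C) → (E × C → Bool) → Prop := fun b ω =>
    match b with
    | Sum.inl e => e ∈ A ∧ ∑ c, aw ends θ μ e c * ind (surv ends μ ω e c) < l - η
    | Sum.inr z => d' < ∑ e ∈ univ.filter (fun e => z.1 ∈ ends e), newμ ends θ μ ω e z.2 with hbad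
  have hb1 : ∀ e ω, bad (Sum.inl e) ω ↔
    (e ∈ A ∧ ∑ c, aw ends θ μ e c * ind (surv ends μ ω e c) < l - η) := fun e ω => Iff.rfl
  have hb2 : ∀ v c ω, bad (Sum.inr (v, c)) ω ↔
    d' < ∑ e ∈ univ.filter (fun e => v ∈ ends e), newμ ends θ μ ω e c := fun v c ω => Iff.rfl
  have hprob : ∀ b, Ex (pB θ μ) (fun ω => ind (bad b ω)) ≤ P := by
    rintro (e | ⟨v, c⟩)
    · by_cases he : e ∈ A
      · simp only [hb1, he, true_and]
        refine le_trans (bad1 H e l η κ (hl e he) hl2 hη hκ0 hκ) (Real.exp_le_exp.2 ?_)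
        refine neg_le_neg (div_le_div_of_nonneg_left (by positivity) (by positivity) ?_)
        linarith
      · simp only [hb1, he, false_and]
        rw [ind_false not_false, Ex_const hp]; exact hP0.le
    · simp only [hb2]
      exact bad2 H v c l η κ K d' hM1 (fun e he => hl e (hA e c he)) hK0 hK hd' hκ0
        (by linarith) (by linarith)
  have hN' : (1 : ℝ) ≤ (N : ℝ) ^ 5 := one_le_pow₀ (by exact_mod_cast hN)
  obtain ⟨ω, -, hgood⟩ := local_lemma hp bad (vr ends μ)
    (by
      rintro (e | ⟨v, c⟩) ω ω' h
      · refine propext ?_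
        rw [hb1, hb1]
        have h' : ∀ i ∈ vr1 ends μ e, ω i = ω' i := h
        have : ∀ c, aw ends θ μ e c * ind (surv ends μ ω e c) =
            aw ends θ μ e c * ind (surv ends μ ω' e c) := by
          intro c
          by_cases hc : 0 < μ e c
          · simp only [surv_congr hc h']
          · rw [H.aw_zero hc]; simp
        simp only [this]
      · refine propext ?_
        rw [hb2, hb2]
        have h' : ∀ i ∈ vr2 ends μ v c, ω i = ω' i := h
        have : ∀ e ∈ univ.filter (fun e => v ∈ ends e),
            newμ ends θ μ ω e c = newμ ends θ μ ω' e c := by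
          intro e he
          unfold newμ
          by_cases hc : 0 < μ e c
          · have h'' : ∀ i ∈ vr1 ends μ e, ω i = ω' i := fun i hi =>
              h' i (mem_biUnion.2 ⟨e, mem_filter.2 ⟨mem_univ _, (mem_filter.1 he).2, hc⟩, hi⟩)
            simp only [surv_congr hc h'', col_congr H.G h'']
          · rw [H.aw_zero hc]; simp
        rw [Finset.sum_congr rfl this])
    (by
      intro b
      refine le_trans (hprob b) ?_
      nlinarith)
    (by
      intro b
      refine le_trans (Finset.sum_le_card_nsmul _ _ P fun b' _ => hprob b') ?_
      rw [nsmul_eq_mul]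
      refine le_trans (b := 12 * (N : ℝ) ^ 5 * P) (mul_le_mul_of_nonneg_right ?_ hP0.le) (by linarith)
      have h1 : ((univ.filter (fun b' => ¬ Disjoint (vr ends μ b) (vr ends μ b'))).card : ℝ) ≤
          12 * (N : ℝ) ^ 5 := by exact_mod_cast vr_nbr H.G hN hN1 hN2 b
      refine le_trans (le_of_eq ?_) h1
      congr!)
  refine ⟨ω, ?_, ?_⟩
  · intro e he
    have := hgood (Sum.inl e)
    rw [hb1] at this
    by_contra hc
    exact this ⟨he, not_le.1 hc⟩
  · intro v c
    have := hgood (Sum.inr (v, c))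
    rw [hb2] at this
    exact not_lt.1 this

lemma reduce (H : Hyp ends θ μ M d) (A : Finset E) (ω : E × C → Bool)
    (h : Colourable ends (A.filter (fun e => ¬ col ends μ ω e)) (newμ ends θ μ ω)) :
    Colourable ends A μ := by
  obtain ⟨γ', h1, h2⟩ := h
  have hpos : ∀ e c, 0 < newμ ends θ μ ω e c → surv ends μ ω e c ∧ 0 < μ e c := by
    intro e c hc
    unfold newμ at hc
    split_ifs at hc with hs
    · refine ⟨hs.1, ?_⟩
      by_contra hn
      rw [H.aw_zero hn] at hc
      exact lt_irrefl _ hc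
    · exact absurd hc (lt_irrefl _)
  set γ : E → C := fun e => if hc : col ends μ ω e then hc.choose else γ' e with hγ
  have hγ1 : ∀ e, col ends μ ω e → got ends μ ω e (γ e) := by
    intro e hc
    simp only [hγ, hc, dif_pos]
    exact hc.choose_spec
  have hγ2 : ∀ e, ¬ col ends μ ω e → γ e = γ' e := by
    intro e hc; simp only [hγ, hc, dif_neg, not_false_iff]
  have mixed : ∀ e ∈ A, ∀ f ∈ A, Adj ends e f → ¬ col ends μ ω e → col ends μ ω f → γ e ≠ γ f := by
    intro e he f hf hadj hce hcf heq
    have hs := (hpos e _ (h1 e (mem_filter.2 ⟨he, hce⟩))).1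
    rw [← hγ2 e hce, heq] at hs
    exact hs f hadj (hγ1 f hcf).1
  refine ⟨γ, ?_, ?_⟩
  · intro e he
    by_cases hc : col ends μ ω e
    · exact (hγ1 e hc).1.2
    · rw [hγ2 e hc]
      exact (hpos e _ (h1 e (mem_filter.2 ⟨he, hc⟩))).2
  · intro e he f hf hne hadj
    by_cases hce : col ends μ ω e
    · by_cases hcf : col ends μ ω f
      · intro heq
        have := (hγ1 e hce).2 f hadj hne.symm
        rw [heq] at this
        exact this (hγ1 f hcf).1
      · exact fun heq => mixed f hf e he hadj.symm hcf hce heq.symm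
    · by_cases hcf : col ends μ ω f
      · exact mixed e he f hf hadj hce hcf
      · rw [hγ2 e hce, hγ2 f hcf]
        exact h2 e (mem_filter.2 ⟨he, hce⟩) f (mem_filter.2 ⟨hf, hcf⟩) hne hadj

lemma one_sub_ge_exp (x : ℝ) (h0 : 0 ≤ x) (h1 : x ≤ 1 / 2) : Real.exp (-(x + 2 * x ^ 2)) ≤ 1 - x := by
  rw [Real.exp_neg]
  have h2 := Real.add_one_le_exp (x + 2 * x ^ 2)
  have h3 : 1 ≤ (1 - x) * Real.exp (x + 2 * x ^ 2) := by
    have : 1 ≤ (1 - x) * (x + 2 * x ^ 2 + 1) := by nlinarith [mul_nonneg h0 h0]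
    refine le_trans this (mul_le_mul_of_nonneg_left h2 (by linarith))
  rw [inv_le_iff_one_le_mul₀ (Real.exp_pos _)]
  exact h3

lemma K_ineq (ε l M : ℝ) (hε0 : 0 < ε) (hε1 : ε ≤ 1) (hM0 : 0 < M) (hM : M ≤ ε / 64)
    (hl : 1 + ε / 2 ≤ l) :
    Real.exp (-((ε / 32) * (1 - 2 * (ε / 32)) * (l - M))) ≤
      Real.exp (-(ε / 32 * ε / 4)) * ((1 - ε / 32) * (1 - ε / 32 * M)) := by
  set θ := ε / 32 with hθ
  have hθ0 : 0 < θ := by positivity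
  have hx0 : 0 ≤ θ * M := by positivity
  have hx1 : θ * M ≤ 1 / 2 := by nlinarith
  have a1 := one_sub_ge_exp θ hθ0.le (by linarith)
  have a2 := one_sub_ge_exp (θ * M) hx0 hx1
  have a3 : Real.exp (-(θ + 2 * θ ^ 2)) * Real.exp (-(θ * M + 2 * (θ * M) ^ 2)) ≤
      (1 - θ) * (1 - θ * M) :=
    mul_le_mul a1 a2 (Real.exp_pos _).le (by linarith)
  refine le_trans ?_ (mul_le_mul_of_nonneg_left a3 (Real.exp_pos _).le)
  rw [← Real.exp_add, ← Real.exp_add]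
  refine Real.exp_le_exp.2 ?_
  have hε : ε = 32 * θ := by rw [hθ]; ring
  have b1 : (θ * M) ^ 2 ≤ θ * M * (1 / 2) := by nlinarith
  have b2 : 1 + ε / 4 + 2 * θ + 2 * M ≤ (1 - 2 * θ) * (l - M) := by
    have : (1 - 2 * θ) * (1 + ε / 2 - M) ≤ (1 - 2 * θ) * (l - M) :=
      mul_le_mul_of_nonneg_left (by linarith) (by linarith)
    nlinarith
  have b3 := mul_le_mul_of_nonneg_left b2 hθ0.le
  nlinarith

lemma iter {ε : ℝ} (hε0 : 0 < ε) (hε1 : ε ≤ 1) {q η Mx : ℝ} {N : ℕ} (hN : 1 ≤ N)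
    (hq : q = Real.exp (-(ε / 32 * ε / 8))) (hη0 : 0 < η) (hη : η ≤ (q - q ^ 2) / 32)
    (hMx : Mx ≤ ε / 64)
    (hP : 48 * (N : ℝ) ^ 5 * Real.exp (-(η / 16 * η / (16 * Mx))) ≤ 1) (hG : IsG ends) (n : ℕ) :
    ∀ (A : Finset E) (μ : E → C → ℝ) (M d l : ℝ),
      (∀ e c, 0 ≤ μ e c) → (∀ e c, μ e c ≤ M) → 0 < M → M * 4 ^ n ≤ Mx → d ≤ 1 →
      d * q ^ n ≤ 1 / 32 →
      (∀ v c, ∑ e ∈ univ.filter (fun e => v ∈ ends e), μ e c ≤ d) →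
      (∀ e ∈ A, l ≤ ∑ c, μ e c) → 1 + ε / 2 + n * η ≤ l → l ≤ 2 →
      (∀ e c, 0 < μ e c → e ∈ A) →
      (∀ e, (univ.filter (fun c => 0 < μ e c)).card ≤ N) →
      (∀ v c, (univ.filter (fun e => v ∈ ends e ∧ 0 < μ e c)).card ≤ N) →
      Colourable ends A μ := by
  have hq0 : 0 < q := by rw [hq]; exact Real.exp_pos _
  have hq1 : q < 1 := by rw [hq, Real.exp_lt_one_iff]; nlinarith [mul_pos hε0 hε0]
  have hqq : q ^ 2 = Real.exp (-(ε / 32 * ε / 4)) := by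
    rw [hq, ← Real.exp_nat_mul]; congr 1; push_cast; ring
  have hη1 : η ≤ 1 := by nlinarith
  induction n with
  | zero =>
    intro A μ M d l h0 hM hM0 hMn hd1 hdq hdeg hl hl1 hl2 hA hN1 hN2
    refine terminal hG A μ h0 (fun e he => ?_) (fun v c => le_trans (hdeg v c) (by simpa using hdq))
    have := hl e he
    simp at hl1
    linarith
  | succ n ih =>
    intro A μ M d l h0 hM hM0 hMn hd1 hdq hdeg hl hl1 hl2 hA hN1 hN2
    have hnη : 0 ≤ (n : ℝ) * η := by positivity
    push_cast at hl1
    by_cases hsmall : d ≤ 1 / 32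
    · refine terminal hG A μ h0 (fun e he => ?_) (fun v c => le_trans (hdeg v c) hsmall)
      have := hl e he
      linarith
    have hMle : M ≤ Mx := by
      have : (1 : ℝ) ≤ 4 ^ (n + 1) := one_le_pow₀ (by norm_num)
      nlinarith
    have hMx0 : 0 < Mx := lt_of_lt_of_le hM0 hMle
    have H : Hyp ends (ε / 32) μ M d :=
      ⟨hG, by positivity, by linarith, h0, hM, hM0, hd1, hdeg⟩
    obtain ⟨ω, hω1, hω2⟩ := step H A hN hN1 hN2 hA l η (η / 16) (q ^ 2) (q * d) (by linarith) hl hl2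
      hη1 (by positivity) (by linarith) (by positivity)
      (by rw [hqq]; exact K_ineq ε l M hε0 hε1 hM0 (hMle.trans hMx) (by linarith))
      (by
        have : 0 ≤ q - q ^ 2 := by nlinarith
        nlinarith)
      (by
        refine le_trans (mul_le_mul_of_nonneg_left (Real.exp_le_exp.2 ?_) (by positivity)) hP
        refine neg_le_neg (div_le_div_of_nonneg_left (by positivity) (by positivity) ?_)
        linarith)
    have hnn : ∀ e c, 0 ≤ newμ ends (ε / 32) μ ω e c := by
      intro e c; unfold newμ; split_ifs; exacts [H.aw_nonneg e c, le_refl _]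
    have hpos : ∀ e c, 0 < newμ ends (ε / 32) μ ω e c → 0 < μ e c ∧ ¬ col ends μ ω e := by
      intro e c hc
      unfold newμ at hc
      split_ifs at hc with hs
      · refine ⟨?_, hs.2⟩
        by_contra hn
        rw [H.aw_zero hn] at hc
        exact lt_irrefl _ hc
      · exact absurd hc (lt_irrefl _)
    refine reduce H A ω (ih _ _ (4 * M) (q * d) (l - η) hnn ?_ (by positivity) ?_ ?_ ?_ hω2 ?_ ?_ ?_
      ?_ ?_ ?_)
    · intro e c
      unfold newμ
      split_ifs
      · linarith [H.aw_le e c, hM e c]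
      · linarith
    · rw [pow_succ] at hMn; linarith
    · nlinarith
    · rw [pow_succ] at hdq; linarith
    · intro e he
      obtain ⟨heA, hnc⟩ := mem_filter.1 he
      refine le_trans (hω1 e heA) (le_of_eq (Finset.sum_congr rfl fun c _ => ?_))
      unfold newμ ind
      simp [hnc]
    · linarith
    · linarith
    · intro e c hc
      exact mem_filter.2 ⟨hA e c (hpos e c hc).1, (hpos e c hc).2⟩
    · intro e
      refine le_trans (card_le_card ?_) (hN1 e)
      intro c hc
      exact mem_filter.2 ⟨mem_univ _, (hpos e c (mem_filter.1 hc).2).1⟩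
    · intro v c
      refine le_trans (card_le_card ?_) (hN2 v c)
      intro e he
      obtain ⟨-, h1, h2⟩ := mem_filter.1 he
      exact mem_filter.2 ⟨mem_univ _, h1, (hpos e c h2).1⟩

end Step3
end Nib

namespace Nib
open Finset Classical

lemma asym (a b c : ℝ) (ha : 0 < a) (hb : 0 < b) :
    ∃ δ₀ : ℝ, ∀ δ : ℝ, δ₀ ≤ δ → 1 ≤ δ ∧ c ≤ δ ∧
      b * (Real.exp (δ ^ ((1 : ℝ) / 25))) ^ 5 * Real.exp (-(a * δ)) ≤ 1 := by
  have h1 : Filter.Tendsto (fun δ : ℝ => δ ^ ((24 : ℝ) / 25)) Filter.atTop Filter.atTop :=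
    tendsto_rpow_atTop (by norm_num)
  have h2 := h1.eventually_ge_atTop (10 / a)
  have h3 : ∀ᶠ δ : ℝ in Filter.atTop, 2 * Real.log b / a ≤ δ := Filter.eventually_ge_atTop _
  obtain ⟨δ₀, h⟩ := Filter.eventually_atTop.1
    ((h2.and h3).and ((Filter.eventually_ge_atTop (1 : ℝ)).and (Filter.eventually_ge_atTop c)))
  refine ⟨δ₀, fun δ hδ => ?_⟩
  obtain ⟨⟨h2, h3⟩, h4, h5⟩ := h δ hδ
  refine ⟨h4, h5, ?_⟩
  have hb' : b = Real.exp (Real.log b) := (Real.exp_log hb).symm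
  rw [hb', ← Real.exp_nat_mul, ← Real.exp_add, ← Real.exp_add, Real.exp_le_one_iff]
  have h6 : δ ^ ((1 : ℝ) / 25) * δ ^ ((24 : ℝ) / 25) = δ := by
    rw [← Real.rpow_add (by linarith)]; norm_num
  have h7 : 0 < δ ^ ((1 : ℝ) / 25) := Real.rpow_pos_of_pos (by linarith) _
  rw [div_le_iff₀ ha] at h2 h3
  push_cast
  nlinarith [mul_le_mul_of_nonneg_left h2 h7.le]

/-- truncate a list to have bounded total weight -/
lemma trunc (L : Finset ℕ) (w : ℕ → ℝ) (s m : ℝ) (hs : 0 < s) (hw : ∀ c ∈ L, w c ≤ m)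
    (h : s ≤ ∑ c ∈ L, w c) : ∃ T ⊆ L, s ≤ ∑ c ∈ T, w c ∧ ∑ c ∈ T, w c ≤ s + m := by
  induction L using Finset.induction_on with
  | empty => simp at h; linarith
  | insert a L ha ih =>
    by_cases h' : s ≤ ∑ c ∈ L, w c
    · obtain ⟨T, hT, h1⟩ := ih (fun c hc => hw c (mem_insert_of_mem hc)) h'
      exact ⟨T, hT.trans (subset_insert _ _), h1⟩
    · refine ⟨_, subset_rfl, h, ?_⟩
      rw [sum_insert ha]
      have := hw a (mem_insert_self _ _)
      linarith

end Nib

theorem stmt_1 :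
    ∀ ε : ℝ, 0 < ε →
    ∃ δ₀ : ℝ, ∀ δ : ℝ, δ₀ ≤ δ →
    ∀ (V : Type) [Fintype V] [DecidableEq V]
      (G : SimpleGraph V) [DecidableRel G.Adj]
      (L : Sym2 V → Finset ℕ) (μ : Sym2 V → ℕ → ℝ),
      -- (L, μ) is an assignment of weighted lists: weights lie in (0,1]
      (∀ e ∈ G.edgeSet, ∀ c ∈ L e, 0 < μ e c ∧ μ e c ≤ 1) →
      -- (a)
      (∀ e ∈ G.edgeSet, ∀ c ∈ L e,
        Real.exp (-(δ ^ ((1 : ℝ) / 25))) ≤ μ e c ∧ μ e c ≤ δ⁻¹) →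
      -- (b)
      (∀ e ∈ G.edgeSet, 1 + ε ≤ ∑ c ∈ L e, μ e c) →
      -- (c)
      (∀ v : V, ∀ c : ℕ,
        ∑ e ∈ G.edgeFinset.filter (fun e => v ∈ e ∧ c ∈ L e), μ e c ≤ 1) →
      ∃ γ : Sym2 V → ℕ, IsLEdgeColouring G L γ := by
  intro ε' hε'
  obtain ⟨ε, hε0, hε1, hεε⟩ : ∃ ε : ℝ, 0 < ε ∧ ε ≤ 1 ∧ ε ≤ ε' :=
    ⟨min ε' 1, lt_min hε' one_pos, min_le_right _ _, min_le_left _ _⟩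
  obtain ⟨q, hq⟩ : ∃ q, q = Real.exp (-(ε / 32 * ε / 8)) := ⟨_, rfl⟩
  have hq0 : 0 < q := hq ▸ Real.exp_pos _
  have hq1 : q < 1 := by
    rw [hq, Real.exp_lt_one_iff]
    have : 0 < ε / 32 * ε / 8 := by positivity
    linarith
  obtain ⟨n, hn⟩ := exists_pow_lt_of_lt_one (show (0 : ℝ) < 1 / 32 by norm_num) hq1
  have hqq : 0 < (q - q ^ 2) / 32 := by nlinarith
  obtain ⟨η, hη0, hη, hη2⟩ : ∃ η : ℝ, 0 < η ∧ η ≤ (q - q ^ 2) / 32 ∧ n * η ≤ ε / 2 := by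
    refine ⟨min ((q - q ^ 2) / 32) (ε / (2 * (n + 1))), lt_min hqq (by positivity),
      min_le_left _ _, ?_⟩
    refine le_trans (mul_le_mul_of_nonneg_left (min_le_right _ _) (by positivity)) ?_
    rw [mul_div_assoc', div_le_div_iff₀ (by positivity) (by positivity)]
    nlinarith
  obtain ⟨δ₀, hδ₀⟩ := Nib.asym (η ^ 2 / (256 * 4 ^ n)) (48 * 4 ^ 5) (4 ^ n * 64 / ε)
    (by positivity) (by positivity)
  refine ⟨δ₀, fun δ hδ V _ _ G _ L μ hμ ha hb hc => ?_⟩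
  obtain ⟨hδ1, hδ2, hδ3⟩ := hδ₀ δ hδ
  have hδ0 : 0 < δ := by linarith
  set X := Real.exp (δ ^ ((1 : ℝ) / 25)) with hX
  have hX1 : 1 ≤ X := Real.one_le_exp (Real.rpow_nonneg hδ0.le _)
  have hXi : Real.exp (-(δ ^ ((1 : ℝ) / 25))) = X⁻¹ := by rw [Real.exp_neg]
  rw [hXi] at ha
  have hN1 : 3 * X ≤ (⌈3 * X⌉₊ : ℕ) := Nat.le_ceil _
  have hN2 : ((⌈3 * X⌉₊ : ℕ) : ℝ) ≤ 4 * X := by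
    have := Nat.ceil_lt_add_one (show 0 ≤ 3 * X by linarith)
    linarith
  generalize ⌈3 * X⌉₊ = N at hN1 hN2
  have hN : 1 ≤ N := by
    have : (1 : ℝ) ≤ N := by linarith
    exact_mod_cast this
  have hδi : δ⁻¹ ≤ 1 := inv_le_one_of_one_le₀ hδ1
  have htr : ∀ e : G.edgeSet, ∃ T ⊆ L e.1, 1 + ε ≤ ∑ c ∈ T, μ e.1 c ∧
      ∑ c ∈ T, μ e.1 c ≤ 1 + ε + δ⁻¹ := fun e =>
    Nib.trunc (L e.1) (μ e.1) (1 + ε) δ⁻¹ (by linarith) (fun c hc' => (ha e.1 e.2 c hc').2)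
      (le_trans (by linarith) (hb e.1 e.2))
  choose T hT hT1 hT2 using htr
  obtain ⟨K, hK⟩ : ∃ K : ℕ, ∀ e : G.edgeSet, ∀ c ∈ T e, c < K + 1 := by
    refine ⟨Finset.univ.sup (fun e => (T e).sup id), fun e c hc' => Nat.lt_succ_of_le ?_⟩
    exact le_trans (Finset.le_sup (f := id) hc')
      (Finset.le_sup (f := fun e => (T e).sup id) (Finset.mem_univ e))
  let ends : G.edgeSet → Finset V := fun e => e.1.toFinset
  let w : G.edgeSet → Fin (K + 1) → ℝ := fun e c => if (c : ℕ) ∈ T e then μ e.1 c else 0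
  have hends : ∀ e v, v ∈ ends e ↔ v ∈ e.1 := fun e v => Sym2.mem_toFinset
  have hG : Nib.IsG ends := by
    constructor
    · intro e
      exact Sym2.card_toFinset_of_not_isDiag _ (G.not_isDiag_of_mem_edgeSet e.2)
    · intro e f h
      apply Subtype.ext
      apply Sym2.ext
      intro v
      rw [← hends, ← hends, h]
  have hw0 : ∀ e c, 0 ≤ w e c := by
    intro e c
    simp only [w]
    split_ifs with h
    · exact (hμ e.1 e.2 _ (hT e h)).1.le
    · exact le_refl _
  have hwp : ∀ e c, 0 < w e c → (c : ℕ) ∈ T e := by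
    intro e c h
    by_contra h'
    simp [w, h'] at h
  have hwX : ∀ e c, 0 < w e c → X⁻¹ ≤ w e c := by
    intro e c h
    have h' := hwp e c h
    simp only [w, if_pos h']
    exact (ha e.1 e.2 _ (hT e h')).1
  have hX0 : 0 < X := by linarith
  have hsum : ∀ e, ∑ c, w e c = ∑ c ∈ T e, μ e.1 c := by
    intro e
    simp only [w]
    rw [Fin.sum_univ_eq_sum_range (fun c => if c ∈ T e then μ e.1 c else 0) (K + 1),
      ← Finset.sum_filter]
    refine Finset.sum_congr ?_ fun _ _ => rfl
    ext c
    simp only [Finset.mem_filter, Finset.mem_range]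
    exact ⟨fun h => h.2, fun h => ⟨hK e c h, h⟩⟩
  have hdeg : ∀ v c, ∑ e, (if v ∈ ends e then w e c else 0) ≤ 1 := by
    intro v c
    refine le_trans ?_ (hc v c)
    rw [Finset.sum_filter, Finset.sum_subtype G.edgeFinset (p := fun e => e ∈ G.edgeSet)
      (fun e => SimpleGraph.mem_edgeFinset)]
    refine Finset.sum_le_sum fun e _ => ?_
    by_cases h1 : v ∈ e.1
    · by_cases h2 : (c : ℕ) ∈ T e
      · simp [hends, h1, h2, w, hT e h2]
      · simp only [hends, h1, h2, w, if_true, if_false, true_and]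
        split_ifs with h3
        · exact (hμ e.1 e.2 _ h3).1.le
        · exact le_refl _
    · simp [hends, h1]
  have hcol := Nib.iter hε0 hε1 (q := q) (η := η) (Mx := δ⁻¹ * 4 ^ n) (N := N) hN hq hη0 hη
    (by
      rw [div_le_iff₀ hε0] at hδ2
      rw [inv_mul_le_iff₀ hδ0]
      linarith)
    (by
      refine le_trans ?_ hδ3
      have e1 : η / 16 * η / (16 * (δ⁻¹ * 4 ^ n)) = η ^ 2 / (256 * 4 ^ n) * δ := by
        field_simp
        norm_num
      rw [e1]
      refine mul_le_mul_of_nonneg_right ?_ (Real.exp_pos _).le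
      have := pow_le_pow_left₀ (Nat.cast_nonneg N) hN2 5
      rw [mul_pow] at this
      linarith) hG n Finset.univ w δ⁻¹ 1 (1 + ε) hw0
    (by
      intro e c
      simp only [w]
      split_ifs with h
      · exact (ha e.1 e.2 _ (hT e h)).2
      · positivity)
    (by positivity) le_rfl le_rfl (by linarith)
    (by
      intro v c
      rw [Finset.sum_filter]
      refine le_trans (le_of_eq ?_) (hdeg v c)
      exact Finset.sum_congr rfl fun e _ => by congr)
    (fun e _ => by rw [hsum]; exact hT1 e)
    (by linarith) (by linarith) (fun e _ _ => Finset.mem_univ e)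
    (by
      intro e
      have h1 : ((Finset.univ.filter (fun c => 0 < w e c)).card : ℝ) * X⁻¹ ≤ 3 := by
        rw [← nsmul_eq_mul]
        refine le_trans (Finset.card_nsmul_le_sum _ (w e) X⁻¹
          fun c hc' => hwX e c (Finset.mem_filter.1 hc').2) ?_
        refine le_trans (Finset.sum_le_univ_sum_of_nonneg (hw0 e)) ?_
        rw [hsum]
        linarith [hT2 e]
      rw [mul_inv_le_iff₀ hX0] at h1
      have h2 : ((Finset.univ.filter (fun c => 0 < w e c)).card : ℝ) ≤ N := h1.trans hN1
      have h3 := Nat.cast_le.1 h2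
      convert h3)
    (by
      intro v c
      have h1 : ((Finset.univ.filter (fun e => v ∈ ends e ∧ 0 < w e c)).card : ℝ) * X⁻¹ ≤ 1 := by
        rw [← nsmul_eq_mul]
        refine le_trans (Finset.card_nsmul_le_sum _ (fun e => w e c) X⁻¹
          fun e he => hwX e c (Finset.mem_filter.1 he).2.2) ?_
        refine le_trans ?_ (hdeg v c)
        rw [Finset.sum_filter]
        refine Finset.sum_le_sum fun e _ => ?_
        by_cases h1 : v ∈ ends e
        · simp only [h1, true_and, if_true]
          split_ifs
          exacts [le_rfl, hw0 e c]
        · simp [h1]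
      rw [mul_inv_le_iff₀ hX0] at h1
      have h2 : ((Finset.univ.filter (fun e => v ∈ ends e ∧ 0 < w e c)).card : ℝ) ≤ N := by
        linarith
      have h3 := Nat.cast_le.1 h2
      convert h3)
  classical
  obtain ⟨γ, hγ1, hγ2⟩ := hcol
  refine ⟨fun e => if h : e ∈ G.edgeSet then (γ ⟨e, h⟩ : ℕ) else 0, ?_, ?_⟩
  · intro e he
    simp only [dif_pos he]
    exact hT ⟨e, he⟩ (hwp _ _ (hγ1 ⟨e, he⟩ (Finset.mem_univ _)))
  · intro e he f hf hne hv
    obtain ⟨v, h1, h2⟩ := hv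
    simp only [dif_pos he, dif_pos hf]
    intro h
    refine hγ2 ⟨e, he⟩ (Finset.mem_univ _) ⟨f, hf⟩ (Finset.mem_univ _) ?_
      ⟨v, (hends _ _).2 h1, (hends _ _).2 h2⟩ (Fin.ext h)
    intro h'
    exact hne (congrArg Subtype.val h')
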